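/- Let p = 5 and let N be a prime with N ≡ 1 (mod 5). Then 1 ≤ r_K ≤ 3. -/

import Mathlib

open scoped TensorProduct

/-- The `p`-rank of a commutative group `G`, i.e. `dim_{𝔽_p}(G ⊗ 𝔽_p)`. -/
noncomputable def pRank (p : ℕ) (G : Type*) [CommGroup G] : ℕ :=
  Module.finrank (ZMod p) (ZMod p ⊗[ℤ] Additive G)

/-- The `p`-rank of the class group of the number field `K`. -/
noncomputable def classRank (p : ℕ) (K : Type*) [Field K] : ℕ :=
  pRank p (ClassGroup (NumberField.RingOfIntegers K))

/-- `p` is a regular prime: `p` does not divide the class number of `ℚ(ζ_p)`. -/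
def RegularPrime (p : ℕ+) : Prop :=
  ¬ (p : ℕ) ∣ Nat.card (ClassGroup (NumberField.RingOfIntegers (CyclotomicField p ℚ)))

/-- `M_i = ∏_{k=1}^{N-1} ∏_{a=1}^{k-1} k^{a^i}` as an element of `𝔽_N = ZMod N`. -/
def Mnum (N i : ℕ) : ZMod N :=
  ∏ k ∈ Finset.Icc 1 (N - 1), ∏ a ∈ Finset.Icc 1 (k - 1), (k : ZMod N) ^ (a ^ i)

/-- `S_i = ∏_{k=1}^{p-1} ((Mk)!)^{k^i}` with `M = (N-1)/p`, as an element of `ZMod N`. -/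
def Snum (p N i : ℕ) : ZMod N :=
  ∏ k ∈ Finset.Icc 1 (p - 1), (Nat.factorial ((N - 1) / p * k) : ZMod N) ^ (k ^ i)

/-- `A_m = ∏_{k=1}^{N-1} k^{k^m}` as an element of `ZMod N`. -/
def Anum (N m : ℕ) : ZMod N :=
  ∏ k ∈ Finset.Icc 1 (N - 1), (k : ZMod N) ^ (k ^ m)

/-- Merel's number `C = ∏_{k=1}^{(N-1)/2} k^k` as an element of `ZMod N`. -/
def MerelC (N : ℕ) : ZMod N :=
  ∏ k ∈ Finset.Icc 1 ((N - 1) / 2), (k : ZMod N) ^ k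

/-- `x` is a `p`-th power in `𝔽_N`. -/
def IsPthPow (p : ℕ) {N : ℕ} (x : ZMod N) : Prop :=
  ∃ y : ZMod N, y ^ p = x

/-!
*Lower bound.* Since `X ^ p - N` is Eisenstein, `N` is totally ramified in `K`, so the norm of an
integer `x` of `K` is a `p`-th power modulo `N` as soon as it is prime to `N`: it is congruent to
the `p`-th power of the residue of `x` at the prime above `N`. If `p` did not divide the class
number, every ideal would have an exponent prime to `p` that makes it principal, so all ideal norms
prime to `N` would be `p`-th powers modulo `N`. But a prime `q ≡ -1 (mod p)` is the norm of an ideal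
of `K`, and by Dirichlet's theorem such a `q` can be chosen not to be a `p`-th power modulo `N`.

*Upper bound, for regular `p`.* Put `F = ℚ(ζ_p)` and `L = K(ζ_p)`, with `Gal(L/F)` generated by `σ`
and `Gal(L/K)` by `δ`, where `δ σ = σ ^ g δ` for a primitive root `g` modulo `p`. As `[L : K]` is
prime to `p`, the group `Cl_K[p]` embeds into the `δ`-fixed part of `Cl_L[p]`. As `p` is prime to
the class number of `F`, the norm to `F` kills `Cl_L[p]`, on which it acts as `(σ - 1) ^ (p - 1)`.
Since `g` is a primitive root, a filtration argument on `Cl_L[p]` shows that its `δ`-fixed part has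
at most the dimension of its `σ`-fixed part. The latter is less than `p - 1` by Chevalley's
ambiguous class number formula: besides the at most `p - 1` primes over `N`, only the prime over `p`
can ramify in `L / F`, and when it does, `N ≢ 1 (mod p ^ 2)`, so that `ζ_p` is not a norm from `L`
and the gain in the unit index makes up for the additional ramified prime.
-/

section EigenFiltration

variable {k V : Type*} [Field k] [AddCommGroup V] [Module k V]

lemma sum_finrank_le_of_iSupIndep [Module.Finite k V] {n : ℕ} {E : Fin n → Submodule k V}
    {U : Submodule k V} (hE : iSupIndep E) (hU : ∀ i, E i ≤ U) :
    ∑ i, Module.finrank k (E i) ≤ Module.finrank k U := by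
  classical
  rw [← Module.finrank_directSum, ← LinearMap.finrank_range_of_inj
    (f := DirectSum.coeLinearMap E) hE.dfinsupp_lsum_injective, DirectSum.range_coeLinearMap]
  exact Submodule.finrank_mono (iSup_le hU)

lemma finrank_inf_ker_pow_le [Module.Finite k V] (W : Submodule k V) (t : Module.End k V) (m : ℕ) :
    Module.finrank k ↥(W ⊓ LinearMap.ker (t ^ m)) ≤
      ∑ i : Fin m, Module.finrank k ((W ⊓ LinearMap.ker (t ^ (i + 1 : ℕ))).map (t ^ (i : ℕ))) := by
  induction m with
  | zero => simp [Module.End.one_eq_id]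
  | succ m ih =>
    set W' := W ⊓ LinearMap.ker (t ^ (m + 1))
    have ker_le : (LinearMap.ker ((t ^ m).domRestrict W')).map W'.subtype ≤
        W ⊓ LinearMap.ker (t ^ m) := by
      rintro _ ⟨x, hx, rfl⟩
      exact ⟨x.2.1, hx⟩
    have rank_nullity := LinearMap.finrank_range_add_finrank_ker ((t ^ m).domRestrict W')
    rw [LinearMap.range_domRestrict, ← Submodule.finrank_map_subtype_eq] at rank_nullity
    rw [Fin.sum_univ_castSucc, ← rank_nullity, add_comm]
    exact Nat.add_le_add_right ((Submodule.finrank_mono ker_le).trans ih) _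

open Polynomial in
lemma sub_one_pow_mem_eigenspace {s d : Module.End k V} {g i : ℕ} (hds : d * s = s ^ g * d)
    {x : V} (hdx : d x = x) (hx : ((s - 1) ^ (i + 1)) x = 0) :
    ((s - 1) ^ i) x ∈ Module.End.eigenspace d ((g : k) ^ i) := by
  have d_mul : d * (s - 1) ^ i = (s ^ g - 1) ^ i * d :=
    ((SemiconjBy.sub_right hds (SemiconjBy.one_right d)).pow_right i).eq
  obtain ⟨r, hr⟩ : (X - 1 : k[X]) ∣ (∑ j ∈ Finset.range g, X ^ j) ^ i - C ((g : k) ^ i) := by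
    rw [← C_1, dvd_iff_isRoot]
    simp [eval_finsetSum]
  have expand : (s ^ g - 1) ^ i = aeval s r * (s - 1) ^ (i + 1) + ((g : k) ^ i) • (s - 1) ^ i := by
    have := congrArg (aeval s) (show (X ^ g - 1 : k[X]) ^ i =
        r * (X - 1) ^ (i + 1) + C ((g : k) ^ i) * (X - 1) ^ i by
      rw [← geom_sum_mul, mul_pow, eq_add_of_sub_eq hr]; ring)
    simpa [Algebra.smul_def] using this
  rw [Module.End.mem_eigenspace_iff, ← Module.End.mul_apply, d_mul, Module.End.mul_apply, hdx,
    expand, LinearMap.add_apply, Module.End.mul_apply, hx, map_zero, zero_add, LinearMap.smul_apply]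

/- The maps `(s - 1) ^ i` carry the pieces of the filtration of `ker (d - 1)` by
`ker ((s - 1) ^ i)` into eigenspaces of `d` for the distinct eigenvalues `g ^ i`. -/
lemma finrank_ker_sub_one_le_of_mul_eq_pow_mul [Module.Finite k V] {s d : Module.End k V}
    {g m : ℕ} (hds : d * s = s ^ g * d) (hs : (s - 1) ^ m = 0)
    (hg : Set.InjOn (fun i ↦ (g : k) ^ i) (Set.Iio m)) :
    Module.finrank k (LinearMap.ker (d - 1)) ≤ Module.finrank k (LinearMap.ker (s - 1)) := by
  set W := LinearMap.ker (d - 1)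
  let E (i : ℕ) := (W ⊓ LinearMap.ker ((s - 1) ^ (i + 1))).map ((s - 1) ^ i)
  have E_le_eigenspace (i : ℕ) : E i ≤ Module.End.eigenspace d ((g : k) ^ i) := by
    rintro _ ⟨x, ⟨hdx, hx⟩, rfl⟩
    exact sub_one_pow_mem_eigenspace hds (by simpa [W, sub_eq_zero] using hdx) hx
  have E_le_ker (i : ℕ) : E i ≤ LinearMap.ker (s - 1) := by
    rintro _ ⟨x, ⟨-, hx⟩, rfl⟩
    rwa [LinearMap.mem_ker, ← Module.End.mul_apply, ← pow_succ']
  have indep : iSupIndep fun i : Fin m ↦ E i :=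
    ((Module.End.eigenspaces_iSupIndep d).comp (f := fun i : Fin m ↦ (g : k) ^ (i : ℕ))
      fun i j hij ↦ Fin.ext (hg i.2 j.2 hij)).mono fun i ↦ E_le_eigenspace i
  calc Module.finrank k W
      = Module.finrank k ↥(W ⊓ LinearMap.ker ((s - 1) ^ m)) := by
        rw [hs, LinearMap.ker_zero, inf_top_eq]
    _ ≤ ∑ i : Fin m, Module.finrank k (E i) := finrank_inf_ker_pow_le W (s - 1) m
    _ ≤ Module.finrank k (LinearMap.ker (s - 1)) :=
        sum_finrank_le_of_iSupIndep indep fun i ↦ E_le_ker i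

end EigenFiltration

section PRank

theorem pow_pRank_eq_card_ker (p : ℕ) [Fact p.Prime] (G : Type*) [CommGroup G] [Finite G] :
    p ^ pRank p G = Nat.card (powMonoidHom p : G →* G).ker := by
  let I : Ideal ℤ := Ideal.span {(p : ℤ)}
  let e : ZMod p ⊗[ℤ] Additive G ≃ₗ[ℤ] Additive G ⧸ (I • ⊤ : Submodule ℤ (Additive G)) :=
    (TensorProduct.congr (Int.quotientSpanNatEquivZMod p).symm.toAddEquiv.toIntLinearEquiv
      (.refl ℤ _)) ≪≫ₗ TensorProduct.quotTensorEquivQuotSMul (Additive G) I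
  have smul_top : (I • ⊤ : Submodule ℤ (Additive G)).toAddSubgroup =
      Subgroup.toAddSubgroup (powMonoidHom p : G →* G).range := by
    ext x
    rw [Submodule.ideal_span_singleton_smul, Submodule.mem_toAddSubgroup,
      Submodule.mem_smul_pointwise_iff_exists]
    constructor
    · rintro ⟨a, -, rfl⟩
      exact ⟨a.toMul, (natCast_zsmul (Additive.ofMul a.toMul) p).symm⟩
    · rintro ⟨a, rfl⟩
      exact ⟨Additive.ofMul a, trivial, natCast_zsmul (Additive.ofMul a) p⟩
  have : Finite (Additive G ⧸ (I • ⊤ : Submodule ℤ (Additive G))) :=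
    .of_surjective _ (Submodule.mkQ_surjective _)
  have : Finite (ZMod p ⊗[ℤ] Additive G) := .of_equiv _ e.symm.toEquiv
  calc p ^ pRank p G = Nat.card (ZMod p ⊗[ℤ] Additive G) := by
        rw [pRank, Module.natCard_eq_pow_finrank (K := ZMod p), Nat.card_zmod]
    _ = (I • ⊤ : Submodule ℤ (Additive G)).toAddSubgroup.index := Nat.card_congr e.toEquiv
    _ = Nat.card (powMonoidHom p : G →* G).ker := by
        rw [smul_top, Subgroup.index_toAddSubgroup, Subgroup.index_range]

theorem one_le_pRank_of_forall_pow_ne {p : ℕ} [Fact p.Prime] {G : Type*} [CommGroup G] [Finite G]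
    {g : G} (hg : ∀ h : G, h ^ p ≠ g) : 1 ≤ pRank p G := by
  rw [Nat.one_le_iff_ne_zero]
  intro h
  have card_ker := pow_pRank_eq_card_ker p G
  rw [h, pow_zero, eq_comm, Subgroup.card_eq_one, MonoidHom.ker_eq_bot_iff] at card_ker
  obtain ⟨x, hx⟩ := Finite.surjective_of_injective card_ker g
  exact hg x hx

end PRank

section PowerIndex

lemma map_range_nsmulAddMonoidHom {A B : Type*} [AddCommGroup A] [AddCommGroup B] {f : A →+ B}
    (hf : Function.Surjective f) (n : ℕ) :
    (nsmulAddMonoidHom n : A →+ A).range.map f = (nsmulAddMonoidHom n : B →+ B).range := by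
  ext x
  constructor
  · rintro ⟨_, ⟨a, rfl⟩, rfl⟩
    exact ⟨f a, (map_nsmul f n a).symm⟩
  · rintro ⟨y, rfl⟩
    obtain ⟨a, rfl⟩ := hf y
    exact ⟨_, ⟨a, rfl⟩, map_nsmul f n a⟩

open AddSubgroup in
theorem index_range_nsmul_eq_pow_finrank_mul_card_ker (A : Type*) [AddCommGroup A]
    [Module.Finite ℤ A] {n : ℕ} (hn : n ≠ 0) :
    (nsmulAddMonoidHom n : A →+ A).range.index =
      n ^ Module.finrank ℤ A * Nat.card (nsmulAddMonoidHom n : A →+ A).ker := by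
  let T := Submodule.torsion ℤ A
  let π : A →+ A ⧸ T := T.mkQ.toAddMonoidHom
  have : Finite T.toAddSubgroup := Module.finite_of_fg_torsion T Submodule.torsion_isTorsion
  have π_surj : π.range = ⊤ := AddMonoidHom.range_eq_top.2 T.mkQ_surjective
  have ker_π : π.ker = T.toAddSubgroup := by ext; simp [π]
  have mem_torsion {a : A} (h : n • a ∈ T) : a ∈ T := by
    rw [Submodule.mem_torsion_iff] at h ⊢
    obtain ⟨m, hm⟩ := h
    refine ⟨m * ⟨n, mem_nonZeroDivisors_of_ne_zero (Nat.cast_ne_zero.2 hn)⟩, ?_⟩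
    exact (mul_smul _ _ _).trans ((congrArg (m • ·) (natCast_zsmul a n)).trans hm)
  have torsion_index : (nsmulAddMonoidHom n : A →+ A).range.relIndex T.toAddSubgroup =
      Nat.card (nsmulAddMonoidHom n : A →+ A).ker := by
    have range_torsion : (nsmulAddMonoidHom n : A →+ A).range.addSubgroupOf T.toAddSubgroup =
        (nsmulAddMonoidHom n : T.toAddSubgroup →+ T.toAddSubgroup).range := by
      ext ⟨t, ht⟩
      constructor
      · rintro ⟨a, rfl⟩
        exact ⟨⟨a, mem_torsion ht⟩, rfl⟩
      · rintro ⟨a, ha⟩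
        exact ⟨a, congrArg Subtype.val ha⟩
    rw [relIndex, range_torsion, index_range]
    exact Nat.card_congr ⟨fun a ↦ ⟨a.1, congrArg Subtype.val a.2⟩,
      fun a ↦ ⟨⟨a, mem_torsion ((show n • a.1 = 0 from a.2).symm ▸ T.zero_mem)⟩, Subtype.ext a.2⟩,
      fun _ ↦ rfl, fun _ ↦ rfl⟩
  have free_index : ((nsmulAddMonoidHom n : A →+ A).range ⊔ T.toAddSubgroup).index =
      n ^ Module.finrank ℤ A := by
    have := index_map (nsmulAddMonoidHom n : A →+ A).range π
    rwa [π_surj, index_top, mul_one, map_range_nsmulAddMonoidHom T.mkQ_surjective,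
      index_range_nsmul, ker_π, finrank_quotient_eq_of_le_torsion le_rfl, eq_comm] at this
  rw [← relIndex_mul_index (le_sup_left (b := T.toAddSubgroup)), relIndex_sup_left,
    torsion_index, free_index, mul_comm]

end PowerIndex

section FixedPoints

variable {p : ℕ} [Fact p.Prime]

open Polynomial in
lemma X_sub_one_pow_pred_eq_geom_sum :
    (X - 1 : (ZMod p)[X]) ^ (p - 1) = ∑ i ∈ Finset.range p, X ^ i := by
  refine mul_right_cancel₀ (X_sub_C_ne_zero 1) ?_
  rw [C_1, ← pow_succ, Nat.sub_add_cancel (Fact.out : p.Prime).one_le, geom_sum_mul,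
    sub_pow_expChar, one_pow]

variable {C : Type*} [CommGroup C]

local instance torsionModule : Module (ZMod p) (Additive (powMonoidHom p : C →* C).ker) :=
  AddCommGroup.zmodModule fun x ↦ Subtype.ext x.toMul.2

local instance [Finite C] : Finite (Additive (powMonoidHom p : C →* C).ker) :=
  inferInstanceAs (Finite (powMonoidHom p : C →* C).ker)

/-- The action of an endomorphism of `C` on the `𝔽_p`-vector space `C[p]`. -/
def endTorsion :
    Monoid.End C →* Module.End (ZMod p) (Additive (powMonoidHom p : C →* C).ker) where
  toFun φ := (MonoidHom.toAdditive ((φ.comp (powMonoidHom p).ker.subtype).codRestrict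
    (powMonoidHom p).ker fun c ↦ by
      rw [MonoidHom.mem_ker, powMonoidHom_apply, ← map_pow]
      exact (congrArg φ c.2).trans (map_one φ))).toZModLinearMap p
  map_one' := rfl
  map_mul' _ _ := rfl

lemma card_fixed_torsion [Finite C] (φ : Monoid.End C) :
    Nat.card {c : C // c ^ p = 1 ∧ φ c = c} =
      p ^ Module.finrank (ZMod p) (LinearMap.ker (endTorsion (p := p) φ - 1)) := by
  have card_ker := Module.natCard_eq_pow_finrank (K := ZMod p)
    (V := LinearMap.ker (endTorsion (p := p) φ - 1))
  rw [Nat.card_zmod] at card_ker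
  rw [← card_ker]
  refine Nat.card_congr ⟨fun c ↦ ⟨Additive.ofMul ⟨c.1, c.2.1⟩, ?_⟩,
    fun x ↦ ⟨x.1.toMul.1, x.1.toMul.2, ?_⟩, fun _ ↦ rfl, fun _ ↦ rfl⟩
  · exact sub_eq_zero.2 (congrArg Additive.ofMul (Subtype.ext c.2.2))
  · exact congrArg (fun y : Additive (powMonoidHom p : C →* C).ker ↦ (y.toMul : C))
      (sub_eq_zero.1 x.2)

lemma endTorsion_sub_one_pow_pred {σ : Monoid.End C}
    (hσ : ∀ c, c ^ p = 1 → ∏ i ∈ Finset.range p, (σ ^ i) c = 1) :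
    (endTorsion (p := p) σ - 1) ^ (p - 1) = 0 := by
  have norm_eq_zero : ∑ i ∈ Finset.range p, endTorsion (p := p) σ ^ i = 0 := by
    refine LinearMap.ext fun x ↦ Additive.toMul.injective (Subtype.ext ?_)
    simp only [← map_pow, LinearMap.sum_apply, toMul_sum, SubmonoidClass.coe_finsetProd]
    exact hσ x.toMul x.toMul.2
  simpa [norm_eq_zero] using congrArg (Polynomial.aeval (endTorsion (p := p) σ))
    (X_sub_one_pow_pred_eq_geom_sum (p := p))

theorem card_fixed_torsion_le [Finite C] {g : ℕ} {σ δ : Monoid.End C} (hδσ : δ * σ = σ ^ g * δ)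
    (hσ : ∀ c, c ^ p = 1 → ∏ i ∈ Finset.range p, (σ ^ i) c = 1)
    (hg : Set.InjOn (fun i ↦ (g : ZMod p) ^ i) (Set.Iio (p - 1))) :
    Nat.card {c : C // c ^ p = 1 ∧ δ c = c} ≤ Nat.card {c : C // c ^ p = 1 ∧ σ c = c} := by
  have semiconj : endTorsion (p := p) δ * endTorsion (p := p) σ =
      endTorsion (p := p) σ ^ g * endTorsion (p := p) δ := by
    rw [← map_mul, hδσ, map_mul, map_pow]
  rw [card_fixed_torsion, card_fixed_torsion]
  exact Nat.pow_le_pow_right (Fact.out : p.Prime).pos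
    (finrank_ker_sub_one_le_of_mul_eq_pow_mul semiconj (endTorsion_sub_one_pow_pred hσ) hg)

end FixedPoints

section AmbiguousClasses

open Subgroup

lemma relIndex_map_map_of_le {G G' : Type*} [CommGroup G] [Group G'] (f : G →* G')
    {A H : Subgroup G} (hA : A ≤ H) :
    (A.map f).relIndex (H.map f) = (A ⊔ H ⊓ f.ker).relIndex H := by
  rw [← relIndex_comap, comap_map_eq, ← inf_relIndex_right, sup_inf_assoc_of_le _ hA, inf_comm]

lemma relIndex_map_inf_ker_comm {G G' G'' : Type*} [CommGroup G] [Group G'] [Group G'']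
    (f : G →* G') (g : G →* G'') (H : Subgroup G) :
    ((H ⊓ g.ker).map f).relIndex (H.map f) = ((H ⊓ f.ker).map g).relIndex (H.map g) := by
  rw [relIndex_map_map_of_le f inf_le_left, relIndex_map_map_of_le g inf_le_left, sup_comm]

/- The case to have in mind: `U = Lˣ` and `I` the fractional ideals of a cyclic extension `L / F`
with generator `σ`, `s = S = σ / 1`, `Nm` the norm and `dv` the divisor map. Then `dv.range` are
the principal ideals and `dv.range.comap S` the ideals with ambiguous class. -/
variable {U I : Type*} [CommGroup U] [CommGroup I] {s Nm : U →* U} {S : I →* I} {dv : U →* I}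

lemma relIndex_map_ker_eq (hdv : ∀ u, dv (s u) = S (dv u)) (hker : Nm.ker = s.range) :
    (s.ker.map dv).relIndex (S.ker ⊓ dv.range) =
      (dv.ker.map s).relIndex (dv.ker ⊓ Nm.ker) := by
  let D := dv.ker.comap s
  have ker_s_le : s.ker ≤ D := ker_le_comap s dv.ker
  have ker_dv_le : dv.ker ≤ D := fun u hu ↦ by
    rw [mem_comap, MonoidHom.mem_ker, hdv, MonoidHom.mem_ker.1 hu, map_one]
  have map_dv : D.map dv = S.ker ⊓ dv.range := by
    ext J
    constructor
    · rintro ⟨u, hu, rfl⟩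
      exact ⟨(hdv u).symm.trans hu, u, rfl⟩
    · rintro ⟨hJ, u, rfl⟩
      exact ⟨u, (hdv u).trans hJ, rfl⟩
  have map_s : D.map s = dv.ker ⊓ Nm.ker := by
    rw [map_comap_eq, hker, inf_comm]
  rw [← map_dv, ← map_s, ← inf_eq_right.2 ker_s_le, ← inf_eq_right.2 ker_dv_le,
    relIndex_map_inf_ker_comm, inf_eq_right.2 ker_dv_le]

lemma relIndex_range_sup_ker_eq (hdv : ∀ u, dv (s u) = S (dv u)) (hker : Nm.ker = s.range) :
    (dv.range ⊔ S.ker).relIndex (dv.range.comap S) =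
      (dv.ker.map Nm).relIndex ((((dv.range.comap S).map S).comap dv).map Nm) := by
  let C := ((dv.range.comap S).map S).comap dv
  have ker_dv_le : dv.ker ≤ C := ker_le_comap dv _
  have range_dv_le : dv.range ≤ dv.range.comap S := by
    rintro _ ⟨u, rfl⟩
    exact ⟨s u, hdv u⟩
  have range_s_le : s.range ≤ C := by
    rintro _ ⟨u, rfl⟩
    exact ⟨dv u, range_dv_le ⟨u, rfl⟩, (hdv u).symm⟩
  have map_dv : C.map dv = (dv.range.comap S).map S := by
    rw [map_comap_eq, inf_eq_right, map_le_iff_le_comap]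
  have map_S : dv.range.map S = s.range.map dv := by
    rw [MonoidHom.map_range, MonoidHom.map_range]
    congr 1
    ext u
    exact (hdv u).symm
  rw [← inf_eq_right.2 ker_dv_le, ← relIndex_map_inf_ker_comm, hker, inf_eq_right.2 range_s_le,
    map_dv, ← map_S, relIndex_map_map_of_le S range_dv_le, inf_eq_right.2 (ker_le_comap S _)]

theorem relIndex_mul_relIndex_dvd (hdv : ∀ u, dv (s u) = S (dv u)) (hker : Nm.ker = s.range)
    (hsNm : ∀ u, s (Nm u) = 1) (hdvNm : ∀ u J, dv u = S J → dv (Nm u) = 1) :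
    dv.range.relIndex (dv.range.comap S) *
        ((dv.ker ⊓ Nm.ker).map s).relIndex (dv.ker ⊓ Nm.ker) ∣
      ((dv.ker ⊓ s.ker).map Nm).relIndex (dv.ker ⊓ s.ker ⊓ Nm.range) *
        (s.ker.map dv).relIndex S.ker := by
  let C := ((dv.range.comap S).map S).comap dv
  have ambiguous : dv.range.relIndex S.ker * (dv.range ⊔ S.ker).relIndex (dv.range.comap S) =
      dv.range.relIndex (dv.range.comap S) := by
    rw [← relIndex_sup_left S.ker dv.range]
    refine relIndex_mul_relIndex _ _ _ le_sup_left (sup_le ?_ (ker_le_comap S _))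
    rintro _ ⟨u, rfl⟩
    exact ⟨s u, hdv u⟩
  have norm_one_units : ((dv.ker ⊓ Nm.ker).map s).relIndex (dv.ker.map s) *
      (dv.ker.map s).relIndex (dv.ker ⊓ Nm.ker) =
        ((dv.ker ⊓ Nm.ker).map s).relIndex (dv.ker ⊓ Nm.ker) := by
    refine relIndex_mul_relIndex _ _ _ (map_mono inf_le_left) ?_
    rintro _ ⟨u, hu, rfl⟩
    exact ⟨(hdv u).trans ((congrArg S hu).trans S.map_one), hker ▸ ⟨u, rfl⟩⟩
  have invariant : (s.ker.map dv).relIndex (S.ker ⊓ dv.range) * dv.range.relIndex S.ker =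
      (s.ker.map dv).relIndex S.ker := by
    rw [← inf_relIndex_left S.ker dv.range]
    refine relIndex_mul_relIndex _ _ _ ?_ inf_le_left
    rintro _ ⟨u, hu, rfl⟩
    exact ⟨(hdv u).symm.trans ((congrArg dv hu).trans dv.map_one), u, rfl⟩
  have norms : ((dv.ker ⊓ s.ker).map Nm).relIndex (dv.ker.map Nm) *
      (dv.ker.map Nm).relIndex (C.map Nm) * (C.map Nm).relIndex (dv.ker ⊓ s.ker ⊓ Nm.range) =
        ((dv.ker ⊓ s.ker).map Nm).relIndex (dv.ker ⊓ s.ker ⊓ Nm.range) := by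
    have le₁ : (dv.ker ⊓ s.ker).map Nm ≤ dv.ker.map Nm := map_mono inf_le_left
    have le₂ : dv.ker.map Nm ≤ C.map Nm := map_mono (ker_le_comap dv _)
    rw [relIndex_mul_relIndex _ _ _ le₁ le₂, relIndex_mul_relIndex _ _ _ (le₁.trans le₂)]
    rintro _ ⟨u, ⟨J, -, hJ⟩, rfl⟩
    exact ⟨⟨hdvNm u J hJ.symm, hsNm u⟩, u, rfl⟩
  refine ⟨(C.map Nm).relIndex (dv.ker ⊓ s.ker ⊓ Nm.range), ?_⟩
  rw [← ambiguous, ← norm_one_units, ← invariant, ← norms, relIndex_map_inf_ker_comm,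
    relIndex_map_ker_eq hdv hker, relIndex_range_sup_ker_eq hdv hker]
  ring

end AmbiguousClasses

section UnitIndex

variable {p : ℕ} [Fact p.Prime]

lemma index_range_pow_dvd {M : Type*} [AddCommGroup M] (f : AddMonoid.End M) (n : ℕ) :
    (AddMonoidHom.range (f ^ n)).index ∣ (AddMonoidHom.range f).index ^ n := by
  induction n with
  | zero =>
    rw [pow_zero, pow_zero, show AddMonoidHom.range (1 : AddMonoid.End M) = ⊤ from
      AddMonoidHom.range_eq_top_of_surjective _ Function.surjective_id, AddSubgroup.index_top]
  | succ n ih =>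
    rw [pow_succ', pow_succ, show AddMonoidHom.range (f * f ^ n) =
      (AddMonoidHom.range (f ^ n)).map (f : M →+ M) from AddMonoidHom.range_comp _ _]
    refine (AddSubgroup.index_map _ (f : M →+ M)).dvd.trans (mul_dvd_mul_right ?_ _)
    exact (AddSubgroup.index_dvd_of_le le_sup_left).trans ih

open Polynomial in
lemma exists_X_sub_one_pow_pred_eq (p : ℕ) [Fact p.Prime] :
    ∃ q : ℤ[X], (X - 1 : ℤ[X]) ^ (p - 1) = ∑ i ∈ Finset.range p, X ^ i + C (p : ℤ) * q := by
  obtain ⟨q, hq⟩ : C (p : ℤ) ∣ (X - 1 : ℤ[X]) ^ (p - 1) - ∑ i ∈ Finset.range p, X ^ i := by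
    rw [C_dvd_iff_dvd_coeff]
    intro i
    rw [← ZMod.intCast_zmod_eq_zero_iff_dvd, ← eq_intCast (Int.castRingHom (ZMod p)), ← coeff_map]
    simp [Polynomial.map_sum, X_sub_one_pow_pred_eq_geom_sum]
  exact ⟨q, by rw [← sub_eq_iff_eq_add', hq]⟩

lemma index_range_nsmul_dvd {M : Type*} [AddCommGroup M] {τ : AddMonoid.End M}
    (hτ : ∑ i ∈ Finset.range p, τ ^ i = 0) :
    (nsmulAddMonoidHom p : M →+ M).range.index ∣ (AddMonoidHom.range (τ - 1)).index ^ (p - 1) := by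
  obtain ⟨q, hq⟩ := exists_X_sub_one_pow_pred_eq p
  have sub_one_pow_pred : (τ - 1) ^ (p - 1) = p * Polynomial.aeval τ q := by
    simpa [hτ] using congrArg (Polynomial.aeval (R := ℤ) τ) hq
  refine (AddSubgroup.index_dvd_of_le ?_).trans (index_range_pow_dvd (τ - 1) (p - 1))
  rintro _ ⟨x, rfl⟩
  rw [sub_one_pow_pred]
  exact ⟨Polynomial.aeval τ q x, (AddMonoid.End.natCast_apply p _).symm⟩

theorem pow_finrank_succ_le_relIndex_pow {U : Type*} [CommGroup U] {A : Subgroup U}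
    [Module.Finite ℤ (Additive A)] {τ : Monoid.End U} {s : U →* U}
    (hs : ∀ u, s u = τ u / u) (hτA : ∀ a ∈ A, τ a ∈ A)
    (hτ : ∀ a ∈ A, ∏ i ∈ Finset.range p, (τ ^ i) a = 1) {ζ : U} (hζA : ζ ∈ A)
    (hζ : orderOf ζ = p) (h0 : (A.map s).relIndex A ≠ 0) :
    p ^ (Module.finrank ℤ (Additive A) + 1) ≤ (A.map s).relIndex A ^ (p - 1) := by
  let τA : AddMonoid.End (Additive A) :=
    MonoidHom.toAdditive ((MonoidHom.comp τ A.subtype).codRestrict A fun a ↦ hτA a a.2)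
  have τA_pow (i : ℕ) (a : Additive A) : (((τA ^ i) a).toMul : U) = (τ ^ i) (a.toMul : U) := by
    induction i with
    | zero => rfl
    | succ i ih => rw [pow_succ', pow_succ']; exact congrArg τ ih
  have sum_pow : ∑ i ∈ Finset.range p, τA ^ i = 0 := by
    refine AddMonoidHom.ext fun a ↦ Additive.toMul.injective (Subtype.ext ?_)
    refine (congrArg (fun b : Additive A ↦ (b.toMul : U))
      (AddMonoidHom.finsetSum_apply _ _ a)).trans ?_
    simp only [toMul_sum, SubmonoidClass.coe_finsetProd]
    exact (Finset.prod_congr rfl fun i _ ↦ τA_pow i a).trans (hτ _ a.toMul.2)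
  have index_eq : (AddMonoidHom.range (τA - 1)).index = (A.map s).relIndex A := by
    rw [Subgroup.relIndex, ← Subgroup.index_toAddSubgroup]
    congr 1
    ext a
    constructor
    · rintro ⟨b, rfl⟩
      exact ⟨b.toMul, b.toMul.2, hs _⟩
    · rintro ⟨b, hb, h⟩
      exact ⟨Additive.ofMul ⟨b, hb⟩, Additive.toMul.injective (Subtype.ext ((hs b).symm.trans h))⟩
  have index_dvd := index_range_nsmul_dvd sum_pow
  rw [index_eq, index_range_nsmul_eq_pow_finrank_mul_card_ker (Additive A)
    (Fact.out : p.Prime).ne_zero] at index_dvd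
  have p_dvd_card_ker : p ∣ Nat.card (nsmulAddMonoidHom p : Additive A →+ Additive A).ker := by
    let z : (nsmulAddMonoidHom p : Additive A →+ Additive A).ker :=
      ⟨Additive.ofMul ⟨ζ, hζA⟩, Additive.toMul.injective (Subtype.ext (hζ ▸ pow_orderOf_eq_one ζ))⟩
    have order_z : addOrderOf z = p := by
      rw [← AddSubgroup.addOrderOf_coe, addOrderOf_ofMul_eq_orderOf, ← Subgroup.orderOf_coe, hζ]
    exact order_z.symm.dvd.trans (addOrderOf_dvd_natCard z)
  rw [pow_succ]
  exact Nat.le_of_dvd (pow_pos (Nat.pos_of_ne_zero h0) _)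
    ((mul_dvd_mul_left _ p_dvd_card_ker).trans index_dvd)

end UnitIndex

section GaloisModules

variable {G : Type*} [Group G]

/-- The endomorphism `σ - 1` of a `G`-module written multiplicatively. -/
def smulDiv {M : Type*} [CommGroup M] [MulDistribMulAction G M] (σ : G) : M →* M :=
  MulDistribMulAction.toMonoidHom M σ / MonoidHom.id M

/-- The norm endomorphism `∑_{g ∈ G} g` of a `G`-module written multiplicatively. -/
def smulProd (G : Type*) [Group G] [Fintype G] (M : Type*) [CommGroup M]
    [MulDistribMulAction G M] : M →* M :=
  ∏ g : G, MulDistribMulAction.toMonoidHom M g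

section

variable {M : Type*} [CommGroup M] [MulDistribMulAction G M]

lemma smulDiv_apply (σ : G) (x : M) : smulDiv σ x = σ • x / x := rfl

lemma mem_ker_smulDiv {σ : G} {x : M} : x ∈ (smulDiv σ : M →* M).ker ↔ σ • x = x := by
  rw [MonoidHom.mem_ker, smulDiv_apply, div_eq_one]

lemma smulProd_apply [Fintype G] (x : M) : smulProd G M x = ∏ g : G, g • x := by
  simp [smulProd, MonoidHom.finsetProd_apply]

lemma smul_smulProd [Fintype G] (σ : G) (x : M) : σ • smulProd G M x = smulProd G M x := by
  rw [smulProd_apply, Finset.smul_prod']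
  simp only [smul_smul]
  exact Fintype.prod_bijective _ (Group.mulLeft_bijective σ) _ _ fun _ ↦ rfl

lemma smulProd_smul [Fintype G] (σ : G) (x : M) : smulProd G M (σ • x) = smulProd G M x := by
  simp only [smulProd_apply, smul_smul]
  exact Fintype.prod_bijective _ (Group.mulRight_bijective σ) _ _ fun _ ↦ rfl

lemma smulProd_smulDiv [Fintype G] (σ : G) (x : M) : smulProd G M (smulDiv σ x) = 1 := by
  rw [smulDiv_apply, map_div, smulProd_smul, div_self']

lemma smul_eq_self_of_forall_mem_zpowers {σ : G} (hσ : ∀ g, g ∈ Subgroup.zpowers σ) {x : M}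
    (hx : σ • x = x) (g : G) : g • x = x :=
  (Subgroup.zpowers_le (H := MulAction.stabilizer G x)).2 hx (hσ g)

lemma prod_range_pow_smul [Fintype G] {σ : G} (hσ : ∀ g, g ∈ Subgroup.zpowers σ) (x : M) :
    ∏ i ∈ Finset.range (Nat.card G), σ ^ i • x = smulProd G M x := by
  classical
  rw [smulProd_apply, ← IsCyclic.image_range_card hσ, Finset.prod_image]
  rw [← orderOf_eq_card_of_forall_mem_zpowers hσ]
  exact fun i hi j hj h ↦
    pow_injOn_Iio_orderOf (Finset.mem_range.1 hi) (Finset.mem_range.1 hj) h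

end

section

variable {U I C : Type*} [CommGroup U] [CommGroup I] [CommGroup C] [MulDistribMulAction G U]
  [MulDistribMulAction G I] [MulDistribMulAction G C]

lemma card_fixed_eq_relIndex {π : I →* C} (hπ : ∀ (g : G) x, π (g • x) = g • π x)
    (π_surj : Function.Surjective π) (σ : G) :
    Nat.card {c : C // σ • c = c} = π.ker.relIndex (π.ker.comap (smulDiv σ)) := by
  have comap_eq : π.ker.comap (smulDiv σ) = (smulDiv σ : C →* C).ker.comap π := by
    ext x
    simp only [Subgroup.mem_comap, MonoidHom.mem_ker, smulDiv_apply, map_div, hπ]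
  rw [Subgroup.relIndex_ker, comap_eq, Subgroup.map_comap_eq_self_of_surjective π_surj]
  exact Nat.card_congr (Equiv.subtypeEquivRight fun _ ↦ mem_ker_smulDiv.symm)

theorem card_fixed_mul_relIndex_dvd [Fintype G] {dv : U →* I} {π : I →* C}
    (hdv : ∀ (g : G) u, dv (g • u) = g • dv u) (hπ : ∀ (g : G) x, π (g • x) = g • π x)
    (π_surj : Function.Surjective π) (exact : π.ker = dv.range) {σ : G}
    (hilbert90 : ∀ u : U, smulProd G U u = 1 → ∃ v, smulDiv σ v = u) :
    Nat.card {c : C // σ • c = c} *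
        ((dv.ker ⊓ (smulProd G U).ker).map (smulDiv σ)).relIndex (dv.ker ⊓ (smulProd G U).ker) ∣
      ((dv.ker ⊓ (smulDiv σ).ker).map (smulProd G U)).relIndex
          (dv.ker ⊓ (smulDiv σ).ker ⊓ (smulProd G U).range) *
        ((smulDiv σ).ker.map dv).relIndex (smulDiv σ : I →* I).ker := by
  have dv_smulDiv (u : U) : dv (smulDiv σ u) = smulDiv σ (dv u) := by
    rw [smulDiv_apply, map_div, hdv, smulDiv_apply]
  have dv_smulProd (u : U) : dv (smulProd G U u) = smulProd G I (dv u) := by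
    simp only [smulProd_apply, map_prod, hdv]
  rw [card_fixed_eq_relIndex hπ π_surj, exact]
  refine relIndex_mul_relIndex_dvd dv_smulDiv (le_antisymm hilbert90 ?_)
    (fun u ↦ mem_ker_smulDiv.2 (smul_smulProd σ u)) fun u J hJ ↦ ?_
  · rintro _ ⟨v, rfl⟩
    exact smulProd_smulDiv σ v
  · rw [dv_smulProd, hJ, smulProd_smulDiv]

end

end GaloisModules

section IdealAction

open NumberField nonZeroDivisors Pointwise

variable {L : Type*} [Field L] [NumberField L] {G : Type*} [Group G] [MulSemiringAction G L]

lemma fractionRing_ringEquivOfRingEquiv_mapRingEquiv (e : L ≃+* L) (x : L) :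
    IsFractionRing.ringEquivOfRingEquiv (K := L) (L := L) (RingOfIntegers.mapRingEquiv e) x =
      e x := by
  obtain ⟨a, b, -, rfl⟩ := IsFractionRing.div_surjective (A := 𝓞 L) x
  rw [map_div₀, map_div₀, IsFractionRing.ringEquivOfRingEquiv_algebraMap,
    IsFractionRing.ringEquivOfRingEquiv_algebraMap]
  rfl

noncomputable instance : SMul G (FractionalIdeal (𝓞 L)⁰ L)ˣ where
  smul g := Units.map (FractionalIdeal.ringEquivOfRingEquiv L L
    (RingOfIntegers.mapRingEquiv (MulSemiringAction.toRingEquiv G L g))).toMonoidHom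

lemma mem_smul_fractionalIdeal_iff {g : G} {I : (FractionalIdeal (𝓞 L)⁰ L)ˣ} {y : L} :
    y ∈ ((g • I : (FractionalIdeal (𝓞 L)⁰ L)ˣ) : FractionalIdeal (𝓞 L)⁰ L) ↔
      g⁻¹ • y ∈ (I : FractionalIdeal (𝓞 L)⁰ L) := by
  let e := MulSemiringAction.toRingEquiv G L g
  change y ∈ ((FractionalIdeal.ringEquivOfRingEquiv L L (RingOfIntegers.mapRingEquiv e)) I.1) ↔ _
  rw [FractionalIdeal.ringEquivOfRingEquiv_apply]
  refine ⟨?_, fun h ↦ ⟨g⁻¹ • y, h, ?_⟩⟩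
  · rintro ⟨x, hx, rfl⟩
    refine (congrArg (· ∈ I.1) ?_).mpr hx
    exact (congrArg (g⁻¹ • ·) (fractionRing_ringEquivOfRingEquiv_mapRingEquiv e x)).trans
      (inv_smul_smul g x)
  · exact (fractionRing_ringEquivOfRingEquiv_mapRingEquiv e _).trans (smul_inv_smul g y)

noncomputable instance : MulDistribMulAction G (FractionalIdeal (𝓞 L)⁰ L)ˣ where
  one_smul I := Units.ext <| FractionalIdeal.ext fun y ↦ by
    rw [mem_smul_fractionalIdeal_iff, inv_one, one_smul]
  mul_smul g h I := Units.ext <| FractionalIdeal.ext fun y ↦ by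
    rw [mem_smul_fractionalIdeal_iff, mem_smul_fractionalIdeal_iff, mem_smul_fractionalIdeal_iff,
      mul_inv_rev, mul_smul]
  smul_mul g := map_mul (Units.map _)
  smul_one g := map_one (Units.map _)

lemma smul_toPrincipalIdeal (g : G) (x : Lˣ) :
    g • toPrincipalIdeal (𝓞 L) L x =
      toPrincipalIdeal (𝓞 L) L (Units.map (MulSemiringAction.toRingHom G L g : L →* L) x) := by
  let e := MulSemiringAction.toRingEquiv G L g
  refine Units.ext ?_
  change FractionalIdeal.ringEquivOfRingEquiv L L (RingOfIntegers.mapRingEquiv e)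
    (toPrincipalIdeal (𝓞 L) L x : FractionalIdeal (𝓞 L)⁰ L) = _
  rw [coe_toPrincipalIdeal, FractionalIdeal.ringEquivOfRingEquiv_spanSingleton,
    fractionRing_ringEquivOfRingEquiv_mapRingEquiv, coe_toPrincipalIdeal]
  rfl

lemma coe_smul_mk0 (g : G) (I : (Ideal (𝓞 L))⁰) :
    ((g • FractionalIdeal.mk0 L I : (FractionalIdeal (𝓞 L)⁰ L)ˣ) : FractionalIdeal (𝓞 L)⁰ L) =
      (g • I.1 : Ideal (𝓞 L)) := by
  ext y
  rw [mem_smul_fractionalIdeal_iff, FractionalIdeal.coe_mk0, FractionalIdeal.mem_coeIdeal,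
    FractionalIdeal.mem_coeIdeal]
  constructor
  · rintro ⟨a, ha, hay⟩
    exact ⟨g • a, Ideal.smul_mem_pointwise_smul g a _ ha,
      (congrArg (g • ·) hay).trans (smul_inv_smul g y)⟩
  · rintro ⟨a, ha, rfl⟩
    exact ⟨g⁻¹ • a, Ideal.mem_pointwise_smul_iff_inv_smul_mem.1 ha, rfl⟩

variable (L) in
/-- The class group of `L` as a quotient of the group of fractional ideals, on which the
automorphisms of `L` act. -/
def IdealClass : Type _ := (FractionalIdeal (𝓞 L)⁰ L)ˣ ⧸ (toPrincipalIdeal (𝓞 L) L).range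

namespace IdealClass

noncomputable instance : CommGroup (IdealClass L) :=
  inferInstanceAs (CommGroup ((FractionalIdeal (𝓞 L)⁰ L)ˣ ⧸ (toPrincipalIdeal (𝓞 L) L).range))

instance : Finite (IdealClass L) := .of_equiv _ (ClassGroup.equiv (R := 𝓞 L) L).toEquiv

/-- The class of an invertible fractional ideal of `L`. -/
def mk : (FractionalIdeal (𝓞 L)⁰ L)ˣ →* IdealClass L := QuotientGroup.mk' _

lemma mk_surjective : Function.Surjective (mk (L := L)) := QuotientGroup.mk'_surjective _

lemma ker_mk : (mk (L := L)).ker = (toPrincipalIdeal (𝓞 L) L).range := QuotientGroup.ker_mk' _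

noncomputable instance : MulDistribMulAction G (IdealClass L) where
  smul g := QuotientGroup.map _ _ (MulDistribMulAction.toMonoidHom _ g) (by
    rintro _ ⟨x, rfl⟩
    exact ⟨_, (smul_toPrincipalIdeal g x).symm⟩)
  one_smul := by
    rintro ⟨I⟩
    exact congrArg mk (one_smul G I)
  mul_smul g h := by
    rintro ⟨I⟩
    exact congrArg mk (mul_smul g h I)
  smul_mul g := map_mul (QuotientGroup.map _ _ _ _)
  smul_one g := map_one (QuotientGroup.map _ _ _ _)

lemma mk_smul (g : G) (I : (FractionalIdeal (𝓞 L)⁰ L)ˣ) : mk (g • I) = g • mk I := rfl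

end IdealClass

end IdealAction

section ClassGroups

open NumberField nonZeroDivisors Pointwise

variable (F L : Type*) [Field F] [NumberField F] [Field L] [NumberField L] [Algebra F L]

lemma ideal_pow_left_injective {R : Type*} [CommRing R] [IsDedekindDomain R] {n : ℕ}
    (hn : n ≠ 0) : Function.Injective (fun I : Ideal R ↦ I ^ n) := fun I J (h : I ^ n = J ^ n) ↦
  le_antisymm
    (Ideal.dvd_iff_le.1 ((UniqueFactorizationMonoid.pow_dvd_pow_iff_dvd hn).1 h.symm.dvd))
    (Ideal.dvd_iff_le.1 ((UniqueFactorizationMonoid.pow_dvd_pow_iff_dvd hn).1 h.dvd))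

lemma algebraMap_intNorm_eq_prod_smul [IsGalois F L] (a : 𝓞 L) :
    algebraMap (𝓞 F) (𝓞 L) (Algebra.intNorm (𝓞 F) (𝓞 L) a) = ∏ g : Gal(L/F), g • a := by
  apply RingOfIntegers.ext
  change algebraMap F L (algebraMap (𝓞 F) F (Algebra.intNorm (𝓞 F) (𝓞 L) a)) = _
  rw [Algebra.algebraMap_intNorm (A := 𝓞 F) (K := F) (L := L) (B := 𝓞 L),
    Algebra.norm_eq_prod_automorphisms]
  exact (map_prod (algebraMap (𝓞 L) L) (fun g : Gal(L/F) ↦ g • a) _).symm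

lemma prod_smul_eq_map_relNorm [IsGalois F L] (I : Ideal (𝓞 L)) :
    ∏ g : Gal(L/F), g • I = (Ideal.relNorm (𝓞 F) I).map (algebraMap (𝓞 F) (𝓞 L)) := by
  obtain rfl | hI := eq_or_ne I ⊥
  · rw [Ideal.relNorm_bot, Ideal.map_bot]
    exact Finset.prod_eq_zero (Finset.mem_univ 1) (one_smul _ _)
  have hI0 : I ∈ (Ideal (𝓞 L))⁰ := mem_nonZeroDivisors_of_ne_zero hI
  -- a power of `I` is principal, which reduces the claim to the norm of elements
  obtain ⟨n, hn, a, ha⟩ : ∃ n ≠ 0, ∃ a, I ^ n = Ideal.span {a} := by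
    refine ⟨Fintype.card (ClassGroup (𝓞 L)), Fintype.card_ne_zero, ?_⟩
    have mk0_pow : (ClassGroup.mk0 ⟨I, hI0⟩) ^ Fintype.card (ClassGroup (𝓞 L)) = 1 :=
      pow_card_eq_one
    rw [← map_pow, ClassGroup.mk0_eq_one_iff] at mk0_pow
    exact mk0_pow.principal
  have smul_pow_eq (g : Gal(L/F)) : (g • I) ^ n = Ideal.span {g • a} := by
    rw [← smul_pow', ha, Ideal.pointwise_smul_def, Ideal.map_span, Set.image_singleton]
    rfl
  refine ideal_pow_left_injective hn ?_
  dsimp only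
  rw [← Finset.prod_pow, ← Ideal.map_pow, ← map_pow, ha, Ideal.relNorm_singleton, Ideal.map_span,
    Set.image_singleton, algebraMap_intNorm_eq_prod_smul, ← Ideal.prod_span_singleton]
  exact Finset.prod_congr rfl fun g _ ↦ smul_pow_eq g

variable {L} in
/-- The class of a nonzero integral ideal of `L`. -/
noncomputable def idealClass : (Ideal (𝓞 L))⁰ →* IdealClass L :=
  IdealClass.mk.comp (FractionalIdeal.mk0 L)

/-- The identification of `IdealClass L` with Mathlib's class group. -/
noncomputable def classGroupEquiv : ClassGroup (𝓞 L) ≃* IdealClass L :=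
  ClassGroup.equiv L

variable {L} in
lemma idealClass_eq_classGroupEquiv_mk0 (I : (Ideal (𝓞 L))⁰) :
    idealClass I = classGroupEquiv L (ClassGroup.mk0 I) :=
  (ClassGroup.equiv_mk0 L I).symm

variable {L} in
lemma idealClass_surjective : Function.Surjective (idealClass : (Ideal (𝓞 L))⁰ → IdealClass L) := by
  intro c
  obtain ⟨I, hI⟩ := ClassGroup.mk0_surjective ((classGroupEquiv L).symm c)
  exact ⟨I, by rw [idealClass_eq_classGroupEquiv_mk0, hI, MulEquiv.apply_symm_apply]⟩

variable {L} in
lemma idealClass_eq_one_iff {I : (Ideal (𝓞 L))⁰} :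
    idealClass I = 1 ↔ (I : Ideal (𝓞 L)).IsPrincipal := by
  rw [idealClass_eq_classGroupEquiv_mk0, EmbeddingLike.map_eq_one_iff, ClassGroup.mk0_eq_one_iff]

variable {L} in
lemma smul_idealClass {G : Type*} [Group G] [MulSemiringAction G L] {g : G}
    {I J : (Ideal (𝓞 L))⁰} (hJ : g • I.1 = J.1) : g • idealClass I = idealClass J :=
  congrArg IdealClass.mk (Units.ext ((coe_smul_mk0 g I).trans (by rw [hJ]; rfl)))

/-- The map on class groups induced by extension of ideals from `F` to `L`. -/
noncomputable def extendedClass : ClassGroup (𝓞 F) →* IdealClass L :=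
  (classGroupEquiv L).toMonoidHom.comp (ClassGroup.extendedHom (𝓞 F) (𝓞 L))

lemma extendedClass_mk0 (I : (Ideal (𝓞 F))⁰) :
    extendedClass F L (ClassGroup.mk0 I) =
      idealClass (ClassGroup.extendedIdeal (𝓞 F) (𝓞 L) I) := by
  rw [extendedClass, MonoidHom.comp_apply, ClassGroup.extendedHom_mk0,
    idealClass_eq_classGroupEquiv_mk0]
  rfl

lemma smul_extendedClass (g : Gal(L/F)) (c : ClassGroup (𝓞 F)) :
    g • extendedClass F L c = extendedClass F L c := by
  obtain ⟨I, rfl⟩ := ClassGroup.mk0_surjective c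
  rw [extendedClass_mk0]
  refine smul_idealClass ?_
  have smul_comp_algebraMap : (MulSemiringAction.toRingHom Gal(L/F) (𝓞 L) g).comp
      (algebraMap (𝓞 F) (𝓞 L)) = algebraMap (𝓞 F) (𝓞 L) := by
    ext x
    exact g.commutes x
  rw [Ideal.pointwise_smul_def, Ideal.map_map, smul_comp_algebraMap]

lemma pow_finrank_eq_one_of_extendedClass_eq_one {c : ClassGroup (𝓞 F)}
    (hc : extendedClass F L c = 1) : c ^ Module.finrank F L = 1 := by
  obtain ⟨I, rfl⟩ := ClassGroup.mk0_surjective c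
  rw [extendedClass_mk0, idealClass_eq_one_iff] at hc
  obtain ⟨a, ha : Ideal.map (algebraMap (𝓞 F) (𝓞 L)) I.1 = Ideal.span {a}⟩ := hc
  have pow_eq := congrArg (Ideal.relNorm (𝓞 F)) ha
  rw [Ideal.relNorm_algebraMap, Ideal.relNorm_singleton,
    ← IsFractionRing.finrank_eq (𝓞 F) F (𝓞 L) L] at pow_eq
  rw [← map_pow]
  exact (ClassGroup.mk0_eq_one_iff (pow_mem I.2 _)).2 ⟨_, pow_eq⟩

lemma eq_one_of_extendedClass_eq_one {c : ClassGroup (𝓞 F)} {n : ℕ} (hcn : c ^ n = 1)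
    (hn : n.Coprime (Module.finrank F L)) (hc : extendedClass F L c = 1) : c = 1 := by
  rw [← orderOf_eq_one_iff, ← Nat.dvd_one, ← hn.gcd_eq_one]
  exact Nat.dvd_gcd (orderOf_dvd_of_pow_eq_one hcn)
    (orderOf_dvd_of_pow_eq_one (pow_finrank_eq_one_of_extendedClass_eq_one F L hc))

variable [IsGalois F L]

lemma smulProd_eq_one_of_pow_eq_one {n : ℕ} (hn : n.Coprime (Nat.card (ClassGroup (𝓞 F))))
    {c : IdealClass L} (hc : c ^ n = 1) : smulProd Gal(L/F) (IdealClass L) c = 1 := by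
  obtain ⟨I, rfl⟩ := idealClass_surjective c
  have relNorm_mem : Ideal.relNorm (𝓞 F) I.1 ∈ (Ideal (𝓞 F))⁰ :=
    mem_nonZeroDivisors_of_ne_zero (Ideal.relNorm_eq_bot_iff.not.2 (nonZeroDivisors.ne_zero I.2))
  have smulProd_eq : smulProd Gal(L/F) (IdealClass L) (idealClass I) =
      extendedClass F L (ClassGroup.mk0 ⟨_, relNorm_mem⟩) := by
    have smul_mem (g : Gal(L/F)) : g • I.1 ∈ (Ideal (𝓞 L))⁰ :=
      mem_nonZeroDivisors_of_ne_zero ((smul_ne_zero_iff_ne g).2 (nonZeroDivisors.ne_zero I.2))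
    rw [smulProd_apply, extendedClass_mk0,
      Finset.prod_congr rfl fun g _ ↦ smul_idealClass (J := ⟨_, smul_mem g⟩) rfl, ← map_prod]
    congr 1
    refine Subtype.ext ?_
    rw [SubmonoidClass.coe_finsetProd]
    exact prod_smul_eq_map_relNorm F L I
  obtain ⟨a, ha : I.1 ^ n = Ideal.span {a}⟩ : (I.1 ^ n).IsPrincipal := by
    rwa [← map_pow, idealClass_eq_one_iff] at hc
  have pow_eq_one : ClassGroup.mk0 ⟨_, relNorm_mem⟩ ^ n = 1 := by
    rw [← map_pow]
    refine (ClassGroup.mk0_eq_one_iff (pow_mem relNorm_mem n)).2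
      ⟨Algebra.intNorm (𝓞 F) (𝓞 L) a, ?_⟩
    rw [← map_pow, ha, Ideal.relNorm_singleton, Ideal.submodule_span_eq]
  have eq_one : ClassGroup.mk0 ⟨_, relNorm_mem⟩ = 1 := by
    rw [← orderOf_eq_one_iff, ← Nat.dvd_one, ← hn.gcd_eq_one]
    exact Nat.dvd_gcd (orderOf_dvd_of_pow_eq_one pow_eq_one) (orderOf_dvd_natCard _)
  rw [smulProd_eq, eq_one, map_one]

end ClassGroups

section InvariantClasses

open NumberField

variable (F K L : Type*) [Field F] [NumberField F] [Field K] [Field L] [NumberField L]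
  [Algebra F L] [Algebra K L] {p : ℕ} [Fact p.Prime]

lemma pow_classRank_le_card_fixed [NumberField K] (hKL : p.Coprime (Module.finrank K L))
    (δ : Gal(L/K)) :
    p ^ classRank p K ≤ Nat.card {c : IdealClass L // c ^ p = 1 ∧ δ • c = c} := by
  rw [classRank, pow_pRank_eq_card_ker]
  refine Nat.card_le_card_of_injective
    (fun c ↦ ⟨extendedClass K L c, ?_, smul_extendedClass K L δ c⟩) fun c d hcd ↦ ?_
  · rw [← map_pow, show c.1 ^ p = 1 from c.2, map_one]
  · have div_mem : (c / d : ClassGroup (𝓞 K)) ^ p = 1 := (c / d).2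
    refine Subtype.ext (div_eq_one.1 (eq_one_of_extendedClass_eq_one K L div_mem hKL ?_))
    rw [map_div, div_eq_one]
    exact congrArg Subtype.val hcd

lemma card_fixed_torsion_mul_card_classGroup_dvd
    (hF : p.Coprime (Nat.card (ClassGroup (𝓞 F)))) (hFL : Module.finrank F L = p) (σ : Gal(L/F)) :
    Nat.card {c : IdealClass L // c ^ p = 1 ∧ σ • c = c} * Nat.card (ClassGroup (𝓞 F)) ∣
      Nat.card {c : IdealClass L // σ • c = c} := by
  let fixed : Subgroup (IdealClass L) := (smulDiv σ).ker
  let torsion : Subgroup (IdealClass L) := (powMonoidHom p).ker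
  have extendedClass_injective : Function.Injective (extendedClass F L) := by
    refine (injective_iff_map_eq_one _).2 fun c hc ↦
      eq_one_of_extendedClass_eq_one F L pow_card_eq_one' (hFL ▸ hF.symm) hc
  have card_fixed : Nat.card {c : IdealClass L // σ • c = c} = Nat.card fixed :=
    Nat.card_congr (Equiv.subtypeEquivRight fun _ ↦ mem_ker_smulDiv.symm)
  have card_fixed_torsion : Nat.card {c : IdealClass L // c ^ p = 1 ∧ σ • c = c} =
      Nat.card (torsion ⊓ fixed : Subgroup (IdealClass L)) :=
    Nat.card_congr (Equiv.subtypeEquivRight fun _ ↦ and_congr Iff.rfl mem_ker_smulDiv.symm)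
  have card_range : Nat.card (extendedClass F L).range = Nat.card (ClassGroup (𝓞 F)) :=
    Nat.card_range_of_injective extendedClass_injective
  have range_le : (extendedClass F L).range ≤ fixed := by
    rintro _ ⟨c, rfl⟩
    exact mem_ker_smulDiv.2 (smul_extendedClass F L σ c)
  have isPGroup : IsPGroup p (torsion ⊓ fixed : Subgroup (IdealClass L)) :=
    fun c ↦ ⟨1, Subtype.ext ((pow_one p).symm ▸ c.2.1)⟩
  obtain ⟨n, hn⟩ := isPGroup.exists_card_eq
  rw [card_fixed, card_fixed_torsion, ← card_range]
  refine Nat.Coprime.mul_dvd_of_dvd_of_dvd ?_ (Subgroup.card_dvd_of_le inf_le_right)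
    (Subgroup.card_dvd_of_le range_le)
  rw [hn, card_range]
  exact hF.pow_left n

variable [IsGalois F L]

theorem card_fixed_torsion_le_of_galois (hF : p.Coprime (Nat.card (ClassGroup (𝓞 F))))
    (hFL : Module.finrank F L = p) {σ : Gal(L/F)} (hσ : ∀ g, g ∈ Subgroup.zpowers σ) {δ : Gal(L/K)}
    {g : ℕ} (hg : Set.InjOn (fun i ↦ (g : ZMod p) ^ i) (Set.Iio (p - 1)))
    (hδσ : ∀ x, δ (σ x) = (σ ^ g) (δ x)) :
    Nat.card {c : IdealClass L // c ^ p = 1 ∧ δ • c = c} ≤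
      Nat.card {c : IdealClass L // c ^ p = 1 ∧ σ • c = c} := by
  let toEnd := MulDistribMulAction.toMonoidEnd (L ≃+* L) (IdealClass L)
  have semiconj : (δ : L ≃+* L) * (σ : L ≃+* L) = ((σ ^ g : Gal(L/F)) : L ≃+* L) * (δ : L ≃+* L) :=
    RingEquiv.ext hδσ
  have coe_pow (i : ℕ) : ((σ ^ i : Gal(L/F)) : L ≃+* L) = (σ : L ≃+* L) ^ i :=
    map_pow (MulSemiringAction.toRingAut Gal(L/F) L) σ i
  refine card_fixed_torsion_le (σ := toEnd σ) (δ := toEnd δ) (g := g) ?_ (fun c hc ↦ ?_) hg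
  · rw [← map_mul, semiconj, map_mul, coe_pow, map_pow]
  · rw [← smulProd_eq_one_of_pow_eq_one F L hF hc, ← prod_range_pow_smul hσ,
      IsGalois.card_aut_eq_finrank, hFL]
    refine Finset.prod_congr rfl fun i _ ↦ ?_
    rw [← map_pow, ← coe_pow]
    rfl

end InvariantClasses

section Units

open NumberField nonZeroDivisors

variable (F L : Type*) [Field F] [Field L] [Algebra F L]

/-- The inclusion into `Lˣ` of the units of the ring of integers of the subfield `F`. -/
noncomputable def unitHom : (𝓞 F)ˣ →* Lˣ :=
  Units.map ((algebraMap F L).comp (algebraMap (𝓞 F) F) : 𝓞 F →* L)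

lemma unitHom_injective : Function.Injective (unitHom F L) :=
  Units.map_injective ((algebraMap F L).injective.comp RingOfIntegers.coe_injective)

lemma unitHom_mem_range {c : F} {u : Lˣ} (hc : algebraMap F L c = u) (hu : IsIntegral ℤ (u : L))
    (hu' : IsIntegral ℤ ((u⁻¹ : Lˣ) : L)) : u ∈ (unitHom F L).range := by
  have c_integral : IsIntegral ℤ c :=
    (isIntegral_algebraMap_iff (algebraMap F L).injective).1 (hc ▸ hu)
  have c_inv_integral : IsIntegral ℤ c⁻¹ :=
    (isIntegral_algebraMap_iff (algebraMap F L).injective).1 (by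
      rwa [map_inv₀, hc, ← Units.val_inv_eq_inv_val])
  have c_ne_zero : c ≠ 0 := by
    rintro rfl
    exact u.ne_zero (hc.symm.trans (map_zero _))
  let e : (𝓞 F)ˣ := ⟨⟨c, c_integral⟩, ⟨c⁻¹, c_inv_integral⟩,
    RingOfIntegers.ext (mul_inv_cancel₀ c_ne_zero), RingOfIntegers.ext (inv_mul_cancel₀ c_ne_zero)⟩
  exact ⟨e, Units.ext hc⟩

lemma isIntegral_unitHom (e : (𝓞 F)ˣ) : IsIntegral ℤ (unitHom F L e : L) :=
  (RingOfIntegers.isIntegral_coe e.1).algebraMap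

lemma exists_sum_mul_pow_apply_ne_zero [FiniteDimensional F L] (σ : Gal(L/F)) {c : ℕ → L}
    (hc : c 0 ≠ 0) : ∃ z, ∑ i ∈ Finset.range (orderOf σ), c i * (σ ^ i) z ≠ 0 := by
  by_contra! h
  have characters_injective :
      Function.Injective fun i : Fin (orderOf σ) ↦ ((σ ^ (i : ℕ) : Gal(L/F)) : L →* L) :=
    fun i j hij ↦ Fin.ext <| pow_injOn_Iio_orderOf i.2 j.2 <|
      AlgEquiv.ext fun z ↦ DFunLike.congr_fun hij z
  have relation : ∑ i : Fin (orderOf σ), c i • ⇑((σ ^ (i : ℕ) : Gal(L/F)) : L →* L) = 0 := by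
    ext z
    rw [Finset.sum_apply]
    exact (Finset.sum_range fun i ↦ c i * (σ ^ i) z).symm.trans (h z)
  exact hc <| Fintype.linearIndependent_iff.1
    ((linearIndependent_monoidHom L L).comp _ characters_injective) _ relation ⟨0, orderOf_pos σ⟩

lemma exists_smulDiv_eq_of_smulProd_eq_one [FiniteDimensional F L] {σ : Gal(L/F)}
    (hσ : ∀ g, g ∈ Subgroup.zpowers σ) {u : Lˣ} (hu : smulProd Gal(L/F) Lˣ u = 1) :
    ∃ v : Lˣ, smulDiv σ v = u := by
  let c (i : ℕ) : Lˣ := ∏ j ∈ Finset.range i, σ ^ j • u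
  have c_zero : c 0 = 1 := Finset.prod_range_zero _
  have c_orderOf : c (orderOf σ) = 1 := by
    rw [orderOf_eq_card_of_forall_mem_zpowers hσ]
    exact (prod_range_pow_smul hσ u).trans hu
  have c_succ (i : ℕ) : c (i + 1) = u * σ • c i := by
    simp only [c, Finset.prod_range_succ', pow_zero, one_smul, Finset.smul_prod', smul_smul,
      ← pow_succ', mul_comm u]
  obtain ⟨z, hz⟩ := exists_sum_mul_pow_apply_ne_zero F L σ (c := fun i ↦ c i) (c 0).ne_zero
  set y := ∑ i ∈ Finset.range (orderOf σ), (c i : L) * (σ ^ i) z with hy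
  have u_mul_σ_y : u * σ y = y := by
    have term (i : ℕ) : u * σ ((c i : L) * (σ ^ i) z) = c (i + 1) * (σ ^ (i + 1)) z := by
      rw [c_succ, map_mul, ← mul_assoc, pow_succ']
      rfl
    rw [hy, map_sum, Finset.mul_sum, Finset.sum_congr rfl fun i _ ↦ term i, ← add_left_inj
      ((c 0 : L) * (σ ^ 0) z), ← Finset.sum_range_succ' (fun i ↦ (c i : L) * (σ ^ i) z),
      Finset.sum_range_succ, c_orderOf, c_zero, pow_orderOf_eq_one, pow_zero]
  refine ⟨(Units.mk0 y hz)⁻¹, ?_⟩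
  rw [smulDiv_apply, smul_inv', div_inv_eq_mul, inv_mul_eq_iff_eq_mul, mul_comm]
  exact Units.ext u_mul_σ_y.symm

variable [NumberField L]

lemma ker_toPrincipalIdeal : (toPrincipalIdeal (𝓞 L) L).ker = (unitHom L L).range := by
  have isIntegral_of_mem_ker {u : Lˣ} (hu : u ∈ (toPrincipalIdeal (𝓞 L) L).ker) :
      IsIntegral ℤ (u : L) := by
    rw [MonoidHom.mem_ker, toPrincipalIdeal_eq_iff, Units.val_one] at hu
    obtain ⟨a, ha⟩ := (FractionalIdeal.mem_one_iff _).1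
      (hu ▸ FractionalIdeal.mem_spanSingleton_self (𝓞 L)⁰ (u : L))
    exact ha ▸ RingOfIntegers.isIntegral_coe a
  refine le_antisymm (fun u hu ↦ unitHom_mem_range L L rfl (isIntegral_of_mem_ker hu)
    (isIntegral_of_mem_ker (inv_mem hu))) ?_
  rintro _ ⟨e, rfl⟩
  rw [MonoidHom.mem_ker, toPrincipalIdeal_eq_iff]
  change FractionalIdeal.spanSingleton _ (algebraMap (𝓞 L) L e) = _
  rw [← FractionalIdeal.coeIdeal_span_singleton, Ideal.span_singleton_eq_top.2 e.isUnit,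
    FractionalIdeal.coeIdeal_top, Units.val_one]

variable [NumberField F] [IsGalois F L]

lemma coe_smulProd_units (u : Lˣ) :
    (smulProd Gal(L/F) Lˣ u : L) = algebraMap F L (Algebra.norm F (u : L)) := by
  rw [Algebra.norm_eq_prod_automorphisms, smulProd_apply, Units.coe_prod]
  rfl

lemma ker_toPrincipalIdeal_inf_ker_smulDiv {σ : Gal(L/F)} (hσ : ∀ g, g ∈ Subgroup.zpowers σ) :
    (toPrincipalIdeal (𝓞 L) L).ker ⊓ (smulDiv σ).ker = (unitHom F L).range := by
  rw [ker_toPrincipalIdeal]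
  refine le_antisymm ?_ ?_
  · rintro _ ⟨⟨e, rfl⟩, he⟩
    obtain ⟨c, hc⟩ : (unitHom L L e : L) ∈ Set.range (algebraMap F L) :=
      (IsGalois.mem_range_algebraMap_iff_fixed _).2 fun g ↦ congrArg Units.val
        (smul_eq_self_of_forall_mem_zpowers hσ (mem_ker_smulDiv.1 he) g)
    refine unitHom_mem_range F L hc (isIntegral_unitHom L L e) ?_
    rw [← map_inv]
    exact isIntegral_unitHom L L e⁻¹
  · rintro _ ⟨e, rfl⟩
    refine ⟨⟨Units.map (algebraMap (𝓞 F) (𝓞 L) : 𝓞 F →* 𝓞 L) e, rfl⟩,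
      mem_ker_smulDiv.2 (Units.ext (σ.commutes _))⟩

lemma smulProd_unitHom (e : (𝓞 F)ˣ) :
    smulProd Gal(L/F) Lˣ (unitHom F L e) = unitHom F L e ^ Module.finrank F L := by
  refine Units.ext ?_
  rw [coe_smulProd_units, Units.val_pow_eq_pow_val]
  exact (congrArg _ (Algebra.norm_algebraMap _)).trans (map_pow _ _ _)

end Units

section UnitIndices

open NumberField

lemma finrank_le_finrank_ker_add_finrank {M M' : Type*} [AddCommGroup M] [AddCommGroup M']
    [Module.Finite ℤ M] [Module.Finite ℤ M'] (f : M →ₗ[ℤ] M') :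
    Module.finrank ℤ M ≤ Module.finrank ℤ f.ker + Module.finrank ℤ M' := by
  rw [← Submodule.finrank_quotient_add_finrank f.ker, f.quotKerEquivRange.finrank_eq, add_comm]
  exact Nat.add_le_add_left (Submodule.finrank_le _) _

lemma finrank_le_two_mul_rank_add_two (L : Type*) [Field L] [NumberField L] :
    Module.finrank ℚ L ≤ 2 * (Units.rank L + 1) := by
  have card_pos : 0 < Fintype.card (InfinitePlace L) := Fintype.card_pos
  rw [Units.rank, Nat.sub_add_cancel card_pos, ← InfinitePlace.card_add_two_mul_card_eq_rank,
    InfinitePlace.card_eq_nrRealPlaces_add_nrComplexPlaces]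
  lia

lemma two_mul_rank_add_two_eq_finrank (F : Type*) [Field F] [NumberField F] [IsTotallyComplex F] :
    2 * (Units.rank F + 1) = Module.finrank ℚ F := by
  have card_pos : 0 < Fintype.card (InfinitePlace F) := Fintype.card_pos
  rw [Units.rank, Nat.sub_add_cancel card_pos, IsTotallyComplex.finrank F,
    InfinitePlace.card_eq_nrRealPlaces_add_nrComplexPlaces, IsTotallyComplex.nrRealPlaces_eq_zero,
    zero_add]

variable (F L : Type*) [Field F] [NumberField F] [Field L] [NumberField L] [Algebra F L]
  [IsGalois F L]

/-- The units of `𝓞 L` of relative norm one over `F`, as a subgroup of `Lˣ`. -/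
noncomputable def relNormOneUnits : Subgroup Lˣ :=
  (toPrincipalIdeal (𝓞 L) L).ker ⊓ (smulProd Gal(L/F) Lˣ).ker

lemma relNormOneUnits_eq_map :
    relNormOneUnits F L =
      (Units.map (RingOfIntegers.norm F : 𝓞 L →* 𝓞 F)).ker.map (unitHom L L) := by
  have mem_ker_iff (e : (𝓞 L)ˣ) : unitHom L L e ∈ (smulProd Gal(L/F) Lˣ).ker ↔
      e ∈ (Units.map (RingOfIntegers.norm F : 𝓞 L →* 𝓞 F)).ker := by
    rw [MonoidHom.mem_ker, MonoidHom.mem_ker, Units.ext_iff, Units.ext_iff, coe_smulProd_units,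
      Units.val_one, Units.val_one, Units.coe_map, map_eq_one_iff _ (algebraMap F L).injective,
      ← RingOfIntegers.coe_injective.eq_iff]
    rfl
  rw [relNormOneUnits, ker_toPrincipalIdeal]
  ext u
  constructor
  · rintro ⟨⟨e, rfl⟩, he⟩
    exact ⟨e, (mem_ker_iff e).1 he, rfl⟩
  · rintro ⟨e, he, rfl⟩
    exact ⟨⟨e, rfl⟩, (mem_ker_iff e).2 he⟩

/-- The relative norm on units, written additively. -/
noncomputable def unitsNorm : Additive (𝓞 L)ˣ →ₗ[ℤ] Additive (𝓞 F)ˣ :=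
  (Units.map (RingOfIntegers.norm F : 𝓞 L →* 𝓞 F)).toAdditive.toIntLinearMap

/-- `relNormOneUnits` is the kernel of `unitsNorm`. -/
noncomputable def kerUnitsNormEquiv :
    (unitsNorm F L).ker ≃ₗ[ℤ] Additive (relNormOneUnits F L) :=
  ((AddEquiv.mk' (Equiv.refl _) fun _ _ ↦ rfl :
    (unitsNorm F L).ker ≃+
      Additive (Units.map (RingOfIntegers.norm F : 𝓞 L →* 𝓞 F)).ker).trans
    ((Subgroup.equivMapOfInjective _ _ (unitHom_injective L L)).trans
      (MulEquiv.subgroupCongr (relNormOneUnits_eq_map F L).symm)).toAdditive).toIntLinearEquiv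

instance : Module.Finite ℤ (Additive (relNormOneUnits F L)) :=
  Module.Finite.equiv (kerUnitsNormEquiv F L)

lemma rank_le_finrank_relNormOneUnits_add_rank :
    Units.rank L ≤ Module.finrank ℤ (Additive (relNormOneUnits F L)) + Units.rank F := by
  rw [← (kerUnitsNormEquiv F L).finrank_eq, ← Units.finrank_eq, ← Units.finrank_eq]
  exact finrank_le_finrank_ker_add_finrank (unitsNorm F L)

variable {p : ℕ} [hp : Fact p.Prime]

lemma pow_lt_relIndex_relNormOneUnits [IsTotallyComplex F] (hF : Module.finrank ℚ F = p - 1)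
    (hFL : Module.finrank F L = p) {ζ : (𝓞 F)ˣ} (hζ : orderOf ζ = p) {σ : Gal(L/F)}
    (hσ : ∀ g, g ∈ Subgroup.zpowers σ)
    (h0 : ((relNormOneUnits F L).map (smulDiv σ)).relIndex (relNormOneUnits F L) ≠ 0) :
    p ^ (Units.rank F + 1) <
      ((relNormOneUnits F L).map (smulDiv σ)).relIndex (relNormOneUnits F L) := by
  have card_Gal : Nat.card Gal(L/F) = p := by rw [IsGalois.card_aut_eq_finrank, hFL]
  have τ_mem (a) (ha : a ∈ relNormOneUnits F L) : σ • a ∈ relNormOneUnits F L := by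
    refine ⟨?_, (smulProd_smul σ a).trans ha.2⟩
    exact (smul_toPrincipalIdeal σ a).symm.trans
      ((congrArg (σ • ·) ha.1).trans (smul_one σ))
  have τ_norm (a) (ha : a ∈ relNormOneUnits F L) :
      ∏ i ∈ Finset.range p, (MulDistribMulAction.toMonoidEnd Gal(L/F) Lˣ σ ^ i) a = 1 := by
    rw [← ha.2, ← prod_range_pow_smul hσ a, card_Gal]
    refine Finset.prod_congr rfl fun i _ ↦ ?_
    rw [← map_pow]
    rfl
  have ζ_mem : unitHom F L ζ ∈ relNormOneUnits F L := by
    refine ⟨((ker_toPrincipalIdeal_inf_ker_smulDiv F L hσ).ge ⟨ζ, rfl⟩).1,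
      MonoidHom.mem_ker.2 ?_⟩
    rw [smulProd_unitHom, hFL, ← map_pow, ← hζ, pow_orderOf_eq_one, map_one]
  have lower_bound := pow_finrank_succ_le_relIndex_pow (fun u ↦ smulDiv_apply σ u) τ_mem τ_norm
    ζ_mem ((orderOf_injective _ (unitHom_injective F L) ζ).trans hζ) h0
  have rank_F := two_mul_rank_add_two_eq_finrank F
  have rank_L := finrank_le_two_mul_rank_add_two L
  have rank_L_le := rank_le_finrank_relNormOneUnits_add_rank F L
  have finrank_L : Module.finrank ℚ L = (p - 1) * (p - 1) + (p - 1) := by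
    rw [← Module.finrank_mul_finrank ℚ F L, hF, hFL, ← Nat.mul_succ,
      Nat.succ_eq_add_one, Nat.sub_add_cancel hp.out.one_le]
  refine lt_of_pow_lt_pow_left₀ (p - 1) (Nat.zero_le _) (lt_of_lt_of_le ?_ lower_bound)
  rw [← pow_mul]
  refine Nat.pow_lt_pow_right hp.out.one_lt ?_
  refine Nat.lt_of_mul_lt_mul_left (a := 2) ?_
  rw [← mul_assoc, rank_F, hF]
  lia

lemma index_range_pow_units {ζ : (𝓞 F)ˣ} (hζ : orderOf ζ = p) :
    (powMonoidHom p : (𝓞 F)ˣ →* (𝓞 F)ˣ).range.index = p ^ (Units.rank F + 1) := by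
  have ker_eq : (powMonoidHom p : (𝓞 F)ˣ →* (𝓞 F)ˣ).ker = rootsOfUnity p (𝓞 F) := rfl
  have card_rootsOfUnity : Nat.card (rootsOfUnity p (𝓞 F)) = p :=
    ((IsPrimitiveRoot.iff_orderOf.2 hζ).map_of_injective
      (f := Units.coeHom (𝓞 F)) Units.val_injective).card_rootsOfUnity
  have index_eq : (powMonoidHom p : (𝓞 F)ˣ →* (𝓞 F)ˣ).range.index =
      p ^ Module.finrank ℤ (Additive (𝓞 F)ˣ) * Nat.card (powMonoidHom p : (𝓞 F)ˣ →* (𝓞 F)ˣ).ker :=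
    index_range_nsmul_eq_pow_finrank_mul_card_ker (Additive (𝓞 F)ˣ) hp.out.ne_zero
  rw [index_eq, ker_eq, card_rootsOfUnity, Units.finrank_eq, pow_succ]

/-- The units of `𝓞 F` that are norms of elements of `L`, as a subgroup of `Lˣ`. -/
noncomputable def normUnits : Subgroup Lˣ :=
  (unitHom F L).range ⊓ (smulProd Gal(L/F) Lˣ).range

lemma relIndex_normUnits_mul (hFL : Module.finrank F L = p) {ζ : (𝓞 F)ˣ}
    (hζ : orderOf ζ = p) :
    ((unitHom F L).range.map (smulProd Gal(L/F) Lˣ)).relIndex (normUnits F L) *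
      (normUnits F L).relIndex (unitHom F L).range = p ^ (Units.rank F + 1) := by
  have map_eq : (unitHom F L).range.map (smulProd Gal(L/F) Lˣ) =
      (powMonoidHom p : (𝓞 F)ˣ →* (𝓞 F)ˣ).range.map (unitHom F L) := by
    rw [← MonoidHom.range_comp, ← MonoidHom.range_comp]
    congr 1
    ext e : 1
    exact (smulProd_unitHom F L e).trans (hFL ▸ (map_pow _ _ _).symm)
  have map_le : (unitHom F L).range.map (smulProd Gal(L/F) Lˣ) ≤ normUnits F L :=
    le_inf (map_eq ▸ Subgroup.map_le_range _ _) (Subgroup.map_le_range _ _)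
  rw [Subgroup.relIndex_mul_relIndex _ _ _ map_le inf_le_left, map_eq,
    MonoidHom.range_eq_map (unitHom F L),
    Subgroup.relIndex_map_map_of_injective _ _ (unitHom_injective F L),
    Subgroup.relIndex_top_right, index_range_pow_units F hζ]

lemma relIndex_normUnits_dvd (hFL : Module.finrank F L = p) {ζ : (𝓞 F)ˣ}
    (hζ : orderOf ζ = p) :
    ((unitHom F L).range.map (smulProd Gal(L/F) Lˣ)).relIndex (normUnits F L) ∣
      p ^ (Units.rank F + 1) :=
  Dvd.intro _ (relIndex_normUnits_mul F L hFL hζ)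

lemma relIndex_normUnits_dvd_of_not_norm (hFL : Module.finrank F L = p) {ζ : (𝓞 F)ˣ}
    (hζ : orderOf ζ = p) (hζL : unitHom F L ζ ∉ (smulProd Gal(L/F) Lˣ).range) :
    ((unitHom F L).range.map (smulProd Gal(L/F) Lˣ)).relIndex (normUnits F L) ∣
      p ^ Units.rank F := by
  have mul_eq := relIndex_normUnits_mul F L hFL hζ
  obtain ⟨k, -, hk⟩ := (Nat.dvd_prime_pow hp.out).1 (Dvd.intro_left _ mul_eq)
  have k_ne_zero : k ≠ 0 := by
    rintro rfl
    exact hζL (Subgroup.relIndex_eq_one.1 hk ⟨ζ, rfl⟩).2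
  have p_dvd : p ∣ (normUnits F L).relIndex (unitHom F L).range :=
    hk ▸ dvd_pow_self p k_ne_zero
  rw [pow_succ] at mul_eq
  exact Nat.dvd_of_mul_dvd_mul_right hp.out.pos (mul_eq ▸ mul_dvd_mul_left _ p_dvd)

end UnitIndices

section InvariantIdeals

open NumberField nonZeroDivisors Pointwise IsDedekindDomain

lemma exists_eq_pow_of_forall_dvd_multiplicity {R : Type*} [CommRing R] [IsDedekindDomain R]
    {I : Ideal R} (hI : I ≠ ⊥) {n : ℕ}
    (h : ∀ v : HeightOneSpectrum R, n ∣ multiplicity v.asIdeal I) : ∃ J, I = J ^ n := by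
  classical
  obtain ⟨t, ht⟩ := Multiset.exists_smul_of_dvd_count
    (UniqueFactorizationMonoid.normalizedFactors I) (k := n) fun P hP ↦ by
      have P_prime := UniqueFactorizationMonoid.prime_of_normalized_factor P hP
      let v : HeightOneSpectrum R := ⟨P, Ideal.isPrime_of_prime P_prime, P_prime.ne_zero⟩
      rw [v.count_normalizedFactors_eq_multiplicity hI]
      exact h v
  exact ⟨t.prod, by rw [← Multiset.prod_nsmul, ← ht, Ideal.prod_normalizedFactors_eq_self hI]⟩

lemma relIndex_le_card_of_forall_exists_inv_mul_mem {G X : Type*} [Group G] [Finite X]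
    {H K : Subgroup G} (f : X → G) (h : ∀ k ∈ K, ∃ x, (f x)⁻¹ * k ∈ H) :
    H.relIndex K ≠ 0 ∧ H.relIndex K ≤ Nat.card X := by
  choose x hx using fun k : K ↦ h k k.2
  have x_injective : Function.Injective fun k : K ⧸ H.subgroupOf K ↦ x k.out := by
    intro k k' (hkk' : x k.out = x k'.out)
    rw [← k.out_eq', ← k'.out_eq']
    refine QuotientGroup.eq.2 ?_
    have mem := mul_mem (inv_mem (hx k.out)) (hkk' ▸ hx k'.out)
    rwa [mul_inv_rev, inv_inv, mul_assoc, mul_inv_cancel_left] at mem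
  have : Finite (K ⧸ H.subgroupOf K) := Finite.of_injective _ x_injective
  exact ⟨Nat.card_pos.ne', Nat.card_le_card_of_injective _ x_injective⟩

section FractionalIdeals

variable (L : Type*) [Field L] [NumberField L]

lemma exists_toPrincipalIdeal_pow_mul_eq_mk0 {k : ℕ} (hk : k ≠ 0)
    (J : (FractionalIdeal (𝓞 L)⁰ L)ˣ) :
    ∃ (n : ℕ) (hn : (n : L) ≠ 0) (I : (Ideal (𝓞 L))⁰),
      toPrincipalIdeal (𝓞 L) L (Units.mk0 (n : L) hn ^ k) * J = FractionalIdeal.mk0 L I := by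
  obtain ⟨a, I, ha, hJ⟩ :=
    FractionalIdeal.exists_eq_spanSingleton_mul (J : FractionalIdeal (𝓞 L)⁰ L)
  set n := Ideal.absNorm (Ideal.span {a})
  obtain ⟨b, hb⟩ : ∃ b, b * a = (n : 𝓞 L) :=
    Ideal.mem_span_singleton'.1 (Ideal.absNorm_mem (Ideal.span {a}))
  have hn : (n : L) ≠ 0 := by
    rw [Nat.cast_ne_zero, Ne, Ideal.absNorm_eq_zero_iff, Ideal.span_singleton_eq_bot]
    exact ha
  have ha' : algebraMap (𝓞 L) L a ≠ 0 :=
    (map_ne_zero_iff _ (FaithfulSMul.algebraMap_injective (𝓞 L) L)).2 ha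
  have n_pow_eq : (n : L) ^ k = algebraMap (𝓞 L) L ((n : 𝓞 L) ^ (k - 1) * b) *
      algebraMap (𝓞 L) L a := by
    rw [← map_mul, mul_assoc, hb, pow_sub_one_mul hk, map_pow, map_natCast]
  have coe_eq : (toPrincipalIdeal (𝓞 L) L (Units.mk0 (n : L) hn ^ k) * J :
      FractionalIdeal (𝓞 L)⁰ L) = (Ideal.span {(n : 𝓞 L) ^ (k - 1) * b} * I : Ideal (𝓞 L)) := by
    rw [coe_toPrincipalIdeal, Units.val_pow_eq_pow_val, Units.val_mk0, hJ, ← mul_assoc,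
      FractionalIdeal.spanSingleton_mul_spanSingleton, n_pow_eq, mul_inv_cancel_right₀ ha',
      FractionalIdeal.coeIdeal_mul, FractionalIdeal.coeIdeal_span_singleton]
  have hI : Ideal.span {(n : 𝓞 L) ^ (k - 1) * b} * I ∈ (Ideal (𝓞 L))⁰ := by
    refine mem_nonZeroDivisors_of_ne_zero fun h ↦ ?_
    rw [h, Submodule.zero_eq_bot, FractionalIdeal.coeIdeal_bot] at coe_eq
    exact (toPrincipalIdeal (𝓞 L) L (Units.mk0 (n : L) hn ^ k) * J).ne_zero coe_eq
  exact ⟨n, hn, ⟨_, hI⟩, Units.ext coe_eq⟩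

/-- The valuations modulo `p` of a fractional ideal at the primes in `S`. -/
noncomputable def countMod (p : ℕ) (S : Finset (HeightOneSpectrum (𝓞 L))) :
    (FractionalIdeal (𝓞 L)⁰ L)ˣ →* Multiplicative (S → ZMod p) where
  toFun I := .ofAdd fun v ↦ (FractionalIdeal.count L v.1 (I : FractionalIdeal (𝓞 L)⁰ L) : ZMod p)
  map_one' := Multiplicative.toAdd.injective <| by
    ext v
    simp [FractionalIdeal.count_one]
  map_mul' I J := Multiplicative.toAdd.injective <| by
    ext v
    simp [FractionalIdeal.count_mul L v.1 I.ne_zero J.ne_zero]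

lemma dvd_multiplicity_of_countMod_eq_one {p : ℕ} {S : Finset (HeightOneSpectrum (𝓞 L))}
    {I : (Ideal (𝓞 L))⁰} (h : countMod L p S (FractionalIdeal.mk0 L I) = 1)
    {v : HeightOneSpectrum (𝓞 L)} (hv : v ∈ S) : p ∣ multiplicity v.asIdeal I.1 := by
  classical
  have hI : I.1 ≠ ⊥ := nonZeroDivisors.ne_zero I.2
  have count_eq : FractionalIdeal.count L v (I.1 : FractionalIdeal (𝓞 L)⁰ L) =
      multiplicity v.asIdeal I.1 := by
    rw [FractionalIdeal.count_coe L v hI, Ideal.count_associates_factors_eq hI v.isPrime v.ne_bot,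
      HeightOneSpectrum.count_normalizedFactors_eq_multiplicity hI]
  rw [← ZMod.natCast_eq_zero_iff, ← Int.cast_natCast, ← count_eq]
  exact congrFun (congrArg Multiplicative.toAdd h) ⟨v, hv⟩

end FractionalIdeals

variable (F L : Type*) [Field F] [NumberField F] [Field L] [NumberField L] [Algebra F L]

lemma exists_mk0_extendedIdeal_eq_mul {σ : Gal(L/F)} {I J : (Ideal (𝓞 F))⁰}
    (h : ClassGroup.mk0 I = ClassGroup.mk0 J) :
    ∃ u ∈ (smulDiv σ : Lˣ →* Lˣ).ker,
      FractionalIdeal.mk0 L (ClassGroup.extendedIdeal (𝓞 F) (𝓞 L) J) =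
        FractionalIdeal.mk0 L (ClassGroup.extendedIdeal (𝓞 F) (𝓞 L) I) *
          toPrincipalIdeal (𝓞 L) L u := by
  obtain ⟨x, y, hx, hy, hxy⟩ := ClassGroup.mk0_eq_mk0_iff.1 h
  have algebraMap_ne_zero {z : 𝓞 F} (hz : z ≠ 0) :
      algebraMap (𝓞 L) L (algebraMap (𝓞 F) (𝓞 L) z) ≠ 0 := by
    simpa only [ne_eq, FaithfulSMul.algebraMap_eq_zero_iff] using hz
  let unit {z : 𝓞 F} (hz : z ≠ 0) : Lˣ := Units.mk0 _ (algebraMap_ne_zero hz)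
  have unit_mem {z : 𝓞 F} (hz : z ≠ 0) : unit hz ∈ (smulDiv σ : Lˣ →* Lˣ).ker :=
    mem_ker_smulDiv.2 (Units.ext (σ.commutes (z : F)))
  refine ⟨unit hx * (unit hy)⁻¹, mul_mem (unit_mem hx) (inv_mem (unit_mem hy)), ?_⟩
  rw [map_mul, map_inv, ← mul_assoc, eq_mul_inv_iff_mul_eq]
  refine Units.ext ?_
  have map_eq := congrArg (Ideal.map (algebraMap (𝓞 F) (𝓞 L))) hxy
  simp only [Ideal.map_mul, Ideal.map_span, Set.image_singleton] at map_eq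
  simp only [Units.val_mul, coe_toPrincipalIdeal, FractionalIdeal.coe_mk0, unit, Units.val_mk0,
    ClassGroup.extendedIdeal, ← FractionalIdeal.coeIdeal_span_singleton,
    ← FractionalIdeal.coeIdeal_mul]
  rw [mul_comm, ← map_eq, mul_comm]

variable [IsGalois F L]

lemma ramificationIdx'_eq_card_inertia (v : HeightOneSpectrum (𝓞 F)) (P : Ideal (𝓞 L))
    [P.LiesOver v.asIdeal] [P.IsPrime] :
    v.asIdeal.ramificationIdx' P = Nat.card (P.inertia Gal(L/F)) := by
  have := v.isPrime
  have := v.isMaximal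
  have : Finite (𝓞 F ⧸ v.asIdeal) := Ideal.finiteQuotientOfFreeOfNeBot v.asIdeal v.ne_bot
  have : Finite v.asIdeal.ResidueField := Finite.of_surjective _
    (Ideal.bijective_algebraMap_quotient_residueField v.asIdeal).surjective
  rw [Ideal.card_inertia_eq_ramificationIdxIn (R := 𝓞 F) v.asIdeal P,
    Ideal.ramificationIdxIn_eq_ramificationIdx v.asIdeal P Gal(L/F),
    Ideal.ramificationIdx'_eq_ramificationIdx v.asIdeal P v.ne_bot]

lemma multiplicity_map_eq_card_inertia_mul {I : Ideal (𝓞 F)} (hI : I ≠ ⊥)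
    (v : HeightOneSpectrum (𝓞 F)) (P : HeightOneSpectrum (𝓞 L)) [P.asIdeal.LiesOver v.asIdeal] :
    multiplicity P.asIdeal (I.map (algebraMap (𝓞 F) (𝓞 L))) =
      Nat.card (P.asIdeal.inertia Gal(L/F)) * multiplicity v.asIdeal I := by
  have emultiplicity_eq := Ideal.IsDedekindDomain.emultiplicity_map_eq_ramificationIdx'_mul
    (S := 𝓞 L) hI v.irreducible P.irreducible P.ne_bot
  have map_ne_bot : I.map (algebraMap (𝓞 F) (𝓞 L)) ≠ ⊥ := Ideal.map_ne_bot_of_ne_bot hI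
  rw [(FiniteMultiplicity.of_prime_left v.prime hI).emultiplicity_eq_multiplicity,
    (FiniteMultiplicity.of_prime_left P.prime map_ne_bot).emultiplicity_eq_multiplicity,
    ramificationIdx'_eq_card_inertia] at emultiplicity_eq
  exact_mod_cast emultiplicity_eq

variable {p : ℕ} [hp : Fact p.Prime]

lemma exists_eq_map_of_forall_smul_eq (hFL : Module.finrank F L = p) {I : Ideal (𝓞 L)}
    (hI : I ≠ ⊥) (hI_smul : ∀ g : Gal(L/F), g • I = I)
    (h : ∀ v : HeightOneSpectrum (𝓞 F), ∃ P : HeightOneSpectrum (𝓞 L),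
      P.asIdeal.LiesOver v.asIdeal ∧
        (P.asIdeal.inertia Gal(L/F) = ⊥ ∨ p ∣ multiplicity P.asIdeal I)) :
    ∃ J : Ideal (𝓞 F), I = J.map (algebraMap (𝓞 F) (𝓞 L)) := by
  have card_Gal : Nat.card Gal(L/F) = p := by rw [IsGalois.card_aut_eq_finrank, hFL]
  have pow_eq : I ^ p = (Ideal.relNorm (𝓞 F) I).map (algebraMap (𝓞 F) (𝓞 L)) := by
    rw [← prod_smul_eq_map_relNorm, Finset.prod_congr rfl fun g _ ↦ hI_smul g, Finset.prod_const,
      Finset.card_univ, ← Nat.card_eq_fintype_card, card_Gal]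
  have relNorm_ne_bot : Ideal.relNorm (𝓞 F) I ≠ ⊥ := Ideal.relNorm_eq_bot_iff.not.2 hI
  obtain ⟨J, hJ⟩ := exists_eq_pow_of_forall_dvd_multiplicity (n := p) relNorm_ne_bot fun v ↦ by
    obtain ⟨P, hPv, hP⟩ := h v
    have multiplicity_eq : p * multiplicity P.asIdeal I =
        Nat.card (P.asIdeal.inertia Gal(L/F)) *
          multiplicity v.asIdeal (Ideal.relNorm (𝓞 F) I) := by
      rw [← multiplicity_map_eq_card_inertia_mul F L relNorm_ne_bot v P, ← pow_eq,
        (FiniteMultiplicity.of_prime_left P.prime hI).multiplicity_pow P.prime]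
    have card_dvd : Nat.card (P.asIdeal.inertia Gal(L/F)) ∣ p :=
      card_Gal ▸ Subgroup.card_subgroup_dvd_card _
    rcases (Nat.dvd_prime hp.out).1 card_dvd with unramified | ramified
    · rw [unramified, one_mul] at multiplicity_eq
      exact Dvd.intro _ multiplicity_eq
    · rw [ramified] at multiplicity_eq
      rw [← Nat.eq_of_mul_eq_mul_left hp.out.pos multiplicity_eq]
      refine hP.resolve_left fun inertia_eq_bot ↦ hp.out.ne_one ?_
      rw [← ramified, inertia_eq_bot, Subgroup.card_bot]
  refine ⟨J, ideal_pow_left_injective hp.out.ne_zero ?_⟩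
  dsimp only
  rw [pow_eq, hJ, Ideal.map_pow]

lemma exists_eq_extendedIdeal_mul_of_countMod_eq_one (hFL : Module.finrank F L = p)
    {σ : Gal(L/F)} (hσ : ∀ g, g ∈ Subgroup.zpowers σ) {S : Finset (HeightOneSpectrum (𝓞 L))}
    (hS : ∀ v : HeightOneSpectrum (𝓞 F), ∃ P : HeightOneSpectrum (𝓞 L),
      P.asIdeal.LiesOver v.asIdeal ∧ (P.asIdeal.inertia Gal(L/F) = ⊥ ∨ P ∈ S))
    {J : (FractionalIdeal (𝓞 L)⁰ L)ˣ} (hJσ : σ • J = J) (hJ : countMod L p S J = 1) :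
    ∃ B : (Ideal (𝓞 F))⁰, ∃ u ∈ (smulDiv σ : Lˣ →* Lˣ).ker,
      J = FractionalIdeal.mk0 L (ClassGroup.extendedIdeal (𝓞 F) (𝓞 L) B) *
        toPrincipalIdeal (𝓞 L) L u := by
  obtain ⟨n, hn, I, hI⟩ := exists_toPrincipalIdeal_pow_mul_eq_mk0 L hp.out.ne_zero J
  set u := Units.mk0 (n : L) hn
  have smul_u (g : Gal(L/F)) : g • u = u := Units.ext (map_natCast g n)
  have hI_smul (g : Gal(L/F)) : g • I.1 = I.1 := by
    refine FractionalIdeal.coeIdeal_injective (K := L) ?_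
    have smul_toPrincipal : g • toPrincipalIdeal (𝓞 L) L (u ^ p) =
        toPrincipalIdeal (𝓞 L) L (u ^ p) :=
      (smul_toPrincipalIdeal g (u ^ p)).trans <|
        congrArg _ ((smul_pow' g u p).trans (congrArg (· ^ p) (smul_u g)))
    have smul_J : g • J = J :=
      smul_eq_self_of_forall_mem_zpowers (M := (FractionalIdeal (𝓞 L)⁰ L)ˣ) hσ hJσ g
    have smul_I : g • FractionalIdeal.mk0 L I = FractionalIdeal.mk0 L I := by
      rw [← hI, smul_mul', smul_J, smul_toPrincipal]
    exact (coe_smul_mk0 g I).symm.trans (congrArg Units.val smul_I)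
  have countMod_I : countMod L p S (FractionalIdeal.mk0 L I) = 1 := by
    rw [← hI, map_mul, hJ, mul_one, map_pow, map_pow]
    exact Multiplicative.toAdd.injective <| by
      ext v
      simp [toAdd_pow]
  obtain ⟨B, hB⟩ := exists_eq_map_of_forall_smul_eq F L hFL (nonZeroDivisors.ne_zero I.2) hI_smul
    fun v ↦ by
      obtain ⟨P, hPv, hP⟩ := hS v
      exact ⟨P, hPv, hP.imp id fun hPS ↦ dvd_multiplicity_of_countMod_eq_one L countMod_I hPS⟩
  have hB0 : B ≠ 0 := by
    rintro rfl
    exact nonZeroDivisors.ne_zero I.2 (hB.trans Ideal.map_bot)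
  refine ⟨⟨B, mem_nonZeroDivisors_of_ne_zero hB0⟩, (u ^ p)⁻¹,
    inv_mem (pow_mem (mem_ker_smulDiv.2 (smul_u σ)) p), ?_⟩
  have extendedIdeal_B : ClassGroup.extendedIdeal (𝓞 F) (𝓞 L)
      ⟨B, mem_nonZeroDivisors_of_ne_zero hB0⟩ = I := Subtype.ext hB.symm
  rw [extendedIdeal_B, ← hI, map_inv, mul_comm (toPrincipalIdeal _ _ _), mul_inv_cancel_right]

lemma relIndex_map_toPrincipalIdeal_le (hFL : Module.finrank F L = p)
    {σ : Gal(L/F)} (hσ : ∀ g, g ∈ Subgroup.zpowers σ) {S : Finset (HeightOneSpectrum (𝓞 L))}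
    (hS : ∀ v : HeightOneSpectrum (𝓞 F), ∃ P : HeightOneSpectrum (𝓞 L),
      P.asIdeal.LiesOver v.asIdeal ∧ (P.asIdeal.inertia Gal(L/F) = ⊥ ∨ P ∈ S)) :
    ((smulDiv σ).ker.map (toPrincipalIdeal (𝓞 L) L)).relIndex (smulDiv σ).ker ≠ 0 ∧
    ((smulDiv σ).ker.map (toPrincipalIdeal (𝓞 L) L)).relIndex (smulDiv σ).ker ≤
      Nat.card (ClassGroup (𝓞 F)) * p ^ S.card := by
  set H := (smulDiv σ).ker.map (toPrincipalIdeal (𝓞 L) L)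
  set I := (smulDiv σ : (FractionalIdeal (𝓞 L)⁰ L)ˣ →* _).ker
  set C := (countMod L p S).ker
  have relIndex_H := relIndex_le_card_of_forall_exists_inv_mul_mem (H := H) (K := C ⊓ I)
    (fun c : ClassGroup (𝓞 F) ↦ FractionalIdeal.mk0 L (ClassGroup.extendedIdeal (𝓞 F) (𝓞 L)
      (Function.surjInv ClassGroup.mk0_surjective c))) fun J ⟨hJ, hJσ⟩ ↦ by
        obtain ⟨B, u, hu, rfl⟩ := exists_eq_extendedIdeal_mul_of_countMod_eq_one F L hFL hσ hS
          (mem_ker_smulDiv.1 hJσ) (MonoidHom.mem_ker.1 hJ)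
        obtain ⟨w, hw, hBw⟩ := exists_mk0_extendedIdeal_eq_mul F L (σ := σ)
          (Function.surjInv_eq ClassGroup.mk0_surjective (ClassGroup.mk0 B))
        refine ⟨ClassGroup.mk0 B, w * u, mul_mem hw hu, ?_⟩
        rw [hBw, map_mul, mul_assoc, inv_mul_cancel_left]
  have card_eq : Nat.card (Multiplicative (S → ZMod p)) = p ^ S.card := by
    rw [Nat.card_congr Multiplicative.toAdd, Nat.card_fun, Nat.card_zmod,
      Nat.card_eq_fintype_card, Fintype.card_coe]
  have relIndex_C : C.relIndex I ∣ p ^ S.card := by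
    rw [← card_eq, Subgroup.relIndex_ker]
    exact Subgroup.card_subgroup_dvd_card _
  have relIndex_C_pos := Nat.pos_of_dvd_of_pos relIndex_C (pow_pos hp.out.pos _)
  have relIndex_dvd : H.relIndex I ∣ H.relIndex (C ⊓ I) * C.relIndex I := by
    rw [Subgroup.relIndex_inf_mul_relIndex]
    exact Subgroup.relIndex_dvd_of_le_left _ inf_le_left
  have mul_pos := Nat.mul_pos (Nat.pos_of_ne_zero relIndex_H.1) relIndex_C_pos
  exact ⟨(Nat.pos_of_dvd_of_pos relIndex_dvd mul_pos).ne',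
    (Nat.le_of_dvd mul_pos relIndex_dvd).trans
      (Nat.mul_le_mul relIndex_H.2 (Nat.le_of_dvd (pow_pos hp.out.pos _) relIndex_C))⟩

end InvariantIdeals

section FixedClasses

open NumberField IsDedekindDomain

variable (F L : Type*) [Field F] [NumberField F] [IsTotallyComplex F] [Field L] [NumberField L]
  [Algebra F L] [IsGalois F L] {p : ℕ} [hp : Fact p.Prime]

theorem card_fixed_torsion_lt (hF : Module.finrank ℚ F = p - 1)
    (hFp : p.Coprime (Nat.card (ClassGroup (𝓞 F)))) (hFL : Module.finrank F L = p) {ζ : (𝓞 F)ˣ}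
    (hζ : orderOf ζ = p) {σ : Gal(L/F)} (hσ : ∀ g, g ∈ Subgroup.zpowers σ)
    {S : Finset (HeightOneSpectrum (𝓞 L))}
    (hS : ∀ v : HeightOneSpectrum (𝓞 F), ∃ P : HeightOneSpectrum (𝓞 L),
      P.asIdeal.LiesOver v.asIdeal ∧ (P.asIdeal.inertia Gal(L/F) = ⊥ ∨ P ∈ S))
    {r : ℕ} (hr : ((unitHom F L).range.map (smulProd Gal(L/F) Lˣ)).relIndex (normUnits F L) ∣ p ^ r)
    (hrS : r + S.card ≤ Units.rank F + p) :
    Nat.card {c : IdealClass L // c ^ p = 1 ∧ σ • c = c} < p ^ (p - 1) := by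
  set q := ((unitHom F L).range.map (smulProd Gal(L/F) Lˣ)).relIndex (normUnits F L)
  set a := ((relNormOneUnits F L).map (smulDiv σ)).relIndex (relNormOneUnits F L)
  set k := ((smulDiv σ).ker.map (toPrincipalIdeal (𝓞 L) L)).relIndex (smulDiv σ).ker
  set t := Nat.card {c : IdealClass L // c ^ p = 1 ∧ σ • c = c}
  set h := Nat.card (ClassGroup (𝓞 F))
  obtain ⟨k_ne_zero, k_le⟩ : k ≠ 0 ∧ k ≤ h * p ^ S.card :=
    relIndex_map_toPrincipalIdeal_le F L hFL hσ hS
  have ambiguous : Nat.card {c : IdealClass L // σ • c = c} * a ∣ q * k := by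
    have dvd := card_fixed_mul_relIndex_dvd (G := Gal(L/F)) (dv := toPrincipalIdeal (𝓞 L) L)
      (fun g u ↦ (smul_toPrincipalIdeal g u).symm) (fun g I ↦ IdealClass.mk_smul g I)
      IdealClass.mk_surjective IdealClass.ker_mk
      (fun u hu ↦ exists_smulDiv_eq_of_smulProd_eq_one F L hσ hu)
    rwa [ker_toPrincipalIdeal_inf_ker_smulDiv F L hσ] at dvd
  have mul_dvd : t * h * a ∣ q * k :=
    (mul_dvd_mul_right (card_fixed_torsion_mul_card_classGroup_dvd F L hFp hFL σ) a).trans ambiguous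
  have q_pos : 0 < q := Nat.pos_of_dvd_of_pos hr (pow_pos hp.out.pos r)
  have mul_pos : 0 < q * k := Nat.mul_pos q_pos (Nat.pos_of_ne_zero k_ne_zero)
  have a_ne_zero : a ≠ 0 := right_ne_zero_of_mul (ne_zero_of_dvd_ne_zero mul_pos.ne' mul_dvd)
  have lt_a : p ^ (Units.rank F + 1) < a :=
    pow_lt_relIndex_relNormOneUnits F L hF hFL hζ hσ a_ne_zero
  have le_pow : t * a ≤ p ^ (Units.rank F + p) := by
    refine Nat.le_of_mul_le_mul_left (c := h) ?_ Nat.card_pos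
    calc h * (t * a) = t * h * a := by ring
      _ ≤ q * k := Nat.le_of_dvd mul_pos mul_dvd
      _ ≤ p ^ r * (h * p ^ S.card) :=
        Nat.mul_le_mul (Nat.le_of_dvd (pow_pos hp.out.pos r) hr) k_le
      _ = h * p ^ (r + S.card) := by rw [pow_add]; ring
      _ ≤ h * p ^ (Units.rank F + p) :=
        Nat.mul_le_mul_left _ (Nat.pow_le_pow_right hp.out.pos hrS)
  refine lt_of_mul_lt_mul_right (le_pow.trans_lt ?_) (Nat.zero_le a)
  have exponent_eq : Units.rank F + p = p - 1 + (Units.rank F + 1) := by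
    have := hp.out.pos
    lia
  rw [exponent_eq, pow_add]
  exact Nat.mul_lt_mul_of_pos_left lt_a (pow_pos hp.out.pos _)

end FixedClasses

section PrimePowerNorms

open IsDedekindDomain

variable {S : Type*} [CommRing S] [IsDedekindDomain S] [Module.Free ℤ S]

lemma absNorm_span_singleton_eq_pow [Module.Finite ℤ S] {x : S} {N n d : ℕ} (hx : x ^ n = N)
    (hn : n ≠ 0) (hd : Module.finrank ℤ S = n * d) : Ideal.absNorm (Ideal.span {x}) = N ^ d := by
  refine Nat.pow_left_injective hn ?_
  dsimp only
  rw [← map_pow, Ideal.span_singleton_pow, hx, Ideal.absNorm_span_natCast, hd, ← pow_mul,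
    mul_comm n]

variable {N d : ℕ} {I : Ideal S}

lemma exists_absNorm_eq_pow_of_dvd (hN : N.Prime) (hI : Ideal.absNorm I = N ^ d) {J : Ideal S}
    (hJ : J ≠ ⊤) (hJI : J ∣ I) : ∃ f, 1 ≤ f ∧ f ≤ d ∧ Ideal.absNorm J = N ^ f := by
  have absNorm_dvd := map_dvd Ideal.absNorm hJI
  rw [hI] at absNorm_dvd
  obtain ⟨f, f_le, absNorm_eq⟩ := (Nat.dvd_prime_pow hN).1 absNorm_dvd
  refine ⟨f, Nat.one_le_iff_ne_zero.2 ?_, f_le, absNorm_eq⟩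
  rintro rfl
  exact hJ (Ideal.absNorm_eq_one_iff.1 absNorm_eq)

lemma card_le_of_prod_dvd {ι : Type*} (hN : N.Prime) (hI : Ideal.absNorm I = N ^ d)
    {T : Finset ι} {J : ι → Ideal S} (hJ : ∀ i ∈ T, J i ≠ ⊤) (hJI : ∏ i ∈ T, J i ∣ I) :
    T.card ≤ d := by
  have pow_dvd : N ^ T.card ∣ Ideal.absNorm (∏ i ∈ T, J i) := by
    rw [map_prod, ← Finset.prod_const]
    refine Finset.prod_dvd_prod_of_dvd _ _ fun i hi ↦ ?_
    obtain ⟨f, f_pos, -, absNorm_eq⟩ :=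
      exists_absNorm_eq_pow_of_dvd hN hI (hJ i hi) ((Finset.dvd_prod_of_mem J hi).trans hJI)
    exact absNorm_eq ▸ dvd_pow_self N (by lia)
  refine (Nat.pow_dvd_pow_iff_le_right hN.one_lt).1 (pow_dvd.trans ?_)
  exact hI ▸ map_dvd Ideal.absNorm hJI

lemma le_of_ideal_pow_dvd (hN : N.Prime) (hI : Ideal.absNorm I = N ^ d) {J : Ideal S} {n : ℕ}
    (hJ : J ≠ ⊤) (hJI : J ^ n ∣ I) : n ≤ d := by
  have card_le := card_le_of_prod_dvd (T := Finset.range n) (J := fun _ ↦ J) hN hI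
    (fun _ _ ↦ hJ) (by rwa [Finset.prod_const, Finset.card_range])
  rwa [Finset.card_range] at card_le

lemma card_le_of_forall_asIdeal_dvd (hN : N.Prime) (hI : Ideal.absNorm I = N ^ d)
    {T : Finset (HeightOneSpectrum S)} (hT : ∀ P ∈ T, P.asIdeal ∣ I) : T.card ≤ d := by
  classical
  refine card_le_of_prod_dvd hN hI (fun P _ ↦ P.isPrime.ne_top) ?_
  rw [← Finset.prod_image (f := fun J : Ideal S ↦ J) fun P _ Q _ ↦ HeightOneSpectrum.ext]
  refine Finset.prod_primes_dvd I (fun J hJ ↦ ?_) fun J hJ ↦ ?_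
  all_goals obtain ⟨P, hP, rfl⟩ := Finset.mem_image.1 hJ
  · exact P.prime
  · exact hT P hP

end PrimePowerNorms

section Congruences

lemma dvd_sub_one_of_pow_dvd_pow_sub_one {R : Type*} [CommRing R] [IsDomain R]
    [IsIntegrallyClosed R] {p : ℕ} (hp : p.Prime) {l x : R} (hl : l ≠ 0)
    (hlp : l ^ (p - 1) ∣ (p : R)) (hx : l ^ p ∣ x ^ p - 1) : l ∣ x - 1 := by
  obtain ⟨u, hu⟩ := hlp
  obtain ⟨c, hc⟩ := hx
  obtain ⟨r, hr⟩ := exists_add_pow_prime_eq hp (x - 1) 1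
  set f := algebraMap R (FractionRing R)
  have hfl : f l ≠ 0 := (map_ne_zero_iff f (IsFractionRing.injective R _)).2 hl
  set b := f (x - 1) / f l
  have hb : f (x - 1) = f l * b := (mul_div_cancel₀ _ hfl).symm
  have b_root : b ^ p + (f (u * r) * b - f c) = 0 := by
    have eq := congrArg f (show l ^ p * c = (x - 1) ^ p + l ^ (p - 1) * u * (x - 1) * r by
      rw [← hu, ← hc]
      linear_combination hr)
    simp only [map_mul, map_add, map_pow, hb] at eq
    refine (mul_eq_zero_iff_left (pow_ne_zero p hfl)).1 ?_
    rw [map_mul]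
    rw [mul_pow, ← pow_sub_one_mul hp.ne_zero (f l)] at eq
    rw [← pow_sub_one_mul hp.ne_zero (f l)]
    linear_combination -eq
  have b_integral : IsIntegral R b := by
    refine ⟨.X ^ p + (.C (u * r) * .X - .C c), Polynomial.monic_X_pow_add ?_, ?_⟩
    · rw [sub_eq_add_neg, ← Polynomial.C_neg]
      exact Polynomial.degree_linear_le.trans_lt (Nat.cast_lt.2 hp.one_lt)
    · simpa using b_root
  obtain ⟨β, hβ⟩ := IsIntegrallyClosed.algebraMap_eq_of_integral b_integral
  refine ⟨β, IsFractionRing.injective R (FractionRing R) ?_⟩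
  rw [map_mul, hβ, hb]

lemma sq_modEq_one_of_orderOf_pow_eq {k : Type*} [Field k] [Finite k] {p q f : ℕ} (hp : p.Prime)
    (hk : Nat.card k = q ^ f) (hq : q ≡ 1 [MOD p]) (hf : ¬ p ∣ f) {t : k}
    (ht : orderOf (t ^ p) = p) : q ≡ 1 [MOD p ^ 2] := by
  have : Fact p.Prime := ⟨hp⟩
  have orderOf_t : orderOf t = p ^ 2 := by
    refine orderOf_eq_prime_pow (n := 1) ?_ ?_
    · rw [pow_one, ← orderOf_eq_one_iff, ht]
      exact hp.ne_one
    · rw [pow_succ, pow_mul, pow_one]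
      simpa only [ht] using pow_orderOf_eq_one (t ^ p)
  have t_ne_zero : t ≠ 0 := by
    rintro rfl
    rw [orderOf_zero] at orderOf_t
    exact pow_ne_zero 2 hp.ne_zero orderOf_t.symm
  have pow_eq_one : t ^ (q ^ f - 1) = 1 := by
    have := Fintype.ofFinite k
    rw [← hk, Nat.card_eq_fintype_card]
    exact FiniteField.pow_card_sub_one_eq_one t t_ne_zero
  have q_pos : 0 < q ^ f := hk ▸ Nat.card_pos
  have sq_dvd : (p : ℤ) ^ 2 ∣ (q : ℤ) ^ f - 1 ^ f := by
    have := Int.natCast_dvd_natCast.2 (orderOf_t ▸ orderOf_dvd_of_pow_eq_one pow_eq_one)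
    rw [one_pow]
    push_cast [q_pos] at this
    exact this
  have p_prime : Prime (p : ℤ) := Nat.prime_iff_prime_int.1 hp
  have hqp : (p : ℤ) ∣ q - 1 := Nat.modEq_iff_dvd.1 hq.symm
  rw [pow_dvd_iff_le_emultiplicity, emultiplicity_pow_sub_pow_of_prime p_prime hqp ?_
    (Int.natCast_dvd_natCast.not.2 hf), ← pow_dvd_iff_le_emultiplicity] at sq_dvd
  · exact (Nat.modEq_iff_dvd.2 (by exact_mod_cast sq_dvd)).symm
  · intro hpq
    exact p_prime.not_dvd_one ((dvd_sub_right hpq).1 hqp)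

end Congruences

section KummerRamification

open NumberField IsDedekindDomain Pointwise

variable (F L : Type*) [Field F] [NumberField F] [Field L] [Algebra F L]

lemma exists_heightOneSpectrum_liesOver (v : HeightOneSpectrum (𝓞 F)) :
    ∃ P : HeightOneSpectrum (𝓞 L), P.asIdeal.LiesOver v.asIdeal := by
  have := v.isMaximal
  obtain ⟨P, hP, hPv⟩ := Ideal.exists_maximal_ideal_liesOver_of_isIntegral (S := 𝓞 L) v.asIdeal
  exact ⟨⟨P, hP.isPrime, Ideal.ne_bot_of_liesOver_of_ne_bot v.ne_bot P⟩, hPv⟩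

variable [NumberField L] [IsGalois F L] {p : ℕ} [hp : Fact p.Prime]

lemma inertia_eq_bot_or_eq_top (hFL : Module.finrank F L = p) (P : Ideal (𝓞 L)) :
    P.inertia Gal(L/F) = ⊥ ∨ P.inertia Gal(L/F) = ⊤ := by
  have : Fact (Nat.card Gal(L/F)).Prime := ⟨by rw [IsGalois.card_aut_eq_finrank, hFL]; exact hp.out⟩
  exact (P.inertia Gal(L/F)).eq_bot_or_eq_top_of_prime_card

lemma inertia_eq_bot_of_smul_sub_notMem (hFL : Module.finrank F L = p) {P : Ideal (𝓞 L)}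
    {σ : Gal(L/F)} {c : 𝓞 L} (h : σ • c - c ∉ P) : P.inertia Gal(L/F) = ⊥ := by
  refine (inertia_eq_bot_or_eq_top F L hFL P).resolve_right fun inertia_eq_top ↦ h ?_
  exact (inertia_eq_top.symm ▸ Subgroup.mem_top σ : σ ∈ P.inertia Gal(L/F)) c

variable {z x : 𝓞 L} {σ : Gal(L/F)} {N : ℕ}

lemma inertia_eq_bot_of_sub_one_notMem (hFL : Module.finrank F L = p) (hσx : σ • x = z * x)
    {P : Ideal (𝓞 L)} [P.IsPrime] (hz : z - 1 ∉ P) (hx : x ∉ P) : P.inertia Gal(L/F) = ⊥ := by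
  refine inertia_eq_bot_of_smul_sub_notMem F L hFL (σ := σ) (c := x) ?_
  rw [hσx, ← sub_one_mul]
  exact Ideal.IsPrime.mul_notMem ‹_› hz hx

lemma inertia_eq_bot_of_sq_modEq_one (hFL : Module.finrank F L = p) (hz : IsPrimitiveRoot z p)
    (hσz : σ • z = z) (hσx : σ • x = z * x) (hxN : x ^ p = N) (hN : N ≡ 1 [MOD p ^ 2])
    {P : Ideal (𝓞 L)} (hx : x ∉ P) : P.inertia Gal(L/F) = ⊥ := by
  obtain ⟨u, -, hu⟩ := hz.self_sub_one_pow_dvd_order (Nat.sub_one_lt hp.out.ne_zero)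
  have hzp : (z - 1) ^ (p - 1) ∣ (p : 𝓞 L) := Dvd.intro_left u hu.symm
  have z_ne_one : z - 1 ≠ 0 := sub_ne_zero.2 (hz.ne_one hp.out.one_lt)
  have pow_dvd : (z - 1) ^ p ∣ x ^ p - 1 := by
    have sq_dvd : (p : 𝓞 L) ^ 2 ∣ N - 1 := by
      obtain ⟨m, hm⟩ := Nat.modEq_iff_dvd.1 hN.symm
      exact ⟨m, by exact_mod_cast congrArg (Int.cast : ℤ → 𝓞 L) hm⟩
    rw [hxN]
    refine .trans ?_ ((pow_dvd_pow_of_dvd hzp 2).trans sq_dvd)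
    rw [← pow_mul]
    exact pow_dvd_pow _ (by have := hp.out.two_le; lia)
  obtain ⟨β, hβ⟩ := dvd_sub_one_of_pow_dvd_pow_sub_one hp.out z_ne_one hzp pow_dvd
  refine inertia_eq_bot_of_smul_sub_notMem F L hFL (σ := σ) (c := β) ?_
  have smul_sub : σ • β - β = x := by
    refine mul_left_cancel₀ z_ne_one ?_
    have smul_eq := congrArg (σ • ·) hβ
    simp only [smul_mul', smul_sub, smul_one, hσz, hσx] at smul_eq
    linear_combination hβ - smul_eq
  rwa [smul_sub]

lemma inertia_eq_top_of_mem (hFL : Module.finrank F L = p) (hF : Module.finrank ℚ F < p)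
    (hN : N.Prime) (hxN : x ^ p = N) {P : HeightOneSpectrum (𝓞 L)} (hx : x ∈ P.asIdeal) :
    P.asIdeal.inertia Gal(L/F) = ⊤ := by
  refine (inertia_eq_bot_or_eq_top F L hFL P.asIdeal).resolve_left fun inertia_eq_bot ↦ ?_
  let v : HeightOneSpectrum (𝓞 F) := ⟨P.asIdeal.under (𝓞 F), inferInstance,
    Ideal.IsIntegral.comap_ne_bot (𝓞 F) P.ne_bot⟩
  have : P.asIdeal.LiesOver v.asIdeal := Ideal.over_under P.asIdeal
  have hN0 : Ideal.span {(N : 𝓞 F)} ≠ ⊥ := by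
    rw [Ne, Ideal.span_singleton_eq_bot]
    exact_mod_cast hN.ne_zero
  have pow_dvd_map : P.asIdeal ^ p ∣ (Ideal.span {(N : 𝓞 F)}).map (algebraMap (𝓞 F) (𝓞 L)) := by
    rw [Ideal.map_span, Set.image_singleton, map_natCast, ← hxN, ← Ideal.span_singleton_pow]
    exact pow_dvd_pow_of_dvd (Ideal.dvd_span_singleton.2 hx) p
  have pow_dvd : v.asIdeal ^ p ∣ Ideal.span {(N : 𝓞 F)} := by
    refine pow_dvd_of_le_multiplicity ?_
    rw [← one_mul (multiplicity _ _), ← Subgroup.card_bot (G := Gal(L/F)), ← inertia_eq_bot,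
      ← multiplicity_map_eq_card_inertia_mul F L hN0 v P]
    exact (FiniteMultiplicity.of_prime_left P.prime
      (Ideal.map_ne_bot_of_ne_bot hN0)).le_multiplicity_of_pow_dvd pow_dvd_map
  have absNorm_N : Ideal.absNorm (Ideal.span {(N : 𝓞 F)}) = N ^ Module.finrank ℚ F := by
    rw [Ideal.absNorm_span_natCast, RingOfIntegers.rank]
  exact hF.not_ge (le_of_ideal_pow_dvd hN absNorm_N v.isPrime.ne_top pow_dvd)

end KummerRamification

section NormResidues

open NumberField IsDedekindDomain Pointwise

variable (F L : Type*) [Field F] [NumberField F] [Field L] [NumberField L] [Algebra F L]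

lemma mk_prod_smul_eq_pow_card {P : Ideal (𝓞 L)} (hP : P.inertia Gal(L/F) = ⊤) (c : 𝓞 L) :
    Ideal.Quotient.mk P (∏ g : Gal(L/F), g • c) =
      Ideal.Quotient.mk P c ^ Nat.card Gal(L/F) := by
  have mk_smul (g : Gal(L/F)) : Ideal.Quotient.mk P (g • c) = Ideal.Quotient.mk P c :=
    Ideal.Quotient.eq.2 ((hP.symm ▸ Subgroup.mem_top g : g ∈ P.inertia Gal(L/F)) c)
  simp only [map_prod, mk_smul, Finset.prod_const, Finset.card_univ, Nat.card_eq_fintype_card]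

lemma exists_pow_card_eq_of_mul_eq {P : HeightOneSpectrum (𝓞 L)}
    (hP : P.asIdeal.inertia Gal(L/F) = ⊤) {ζ : (𝓞 F)ˣ} {y : Lˣ}
    (hy : smulProd Gal(L/F) Lˣ y = unitHom F L ζ) {c d : 𝓞 L} (hd : d ∉ P.asIdeal)
    (hyd : y * algebraMap (𝓞 L) L d = algebraMap (𝓞 L) L c) :
    ∃ t : 𝓞 L ⧸ P.asIdeal, t ^ Nat.card Gal(L/F) =
      Ideal.Quotient.mk P.asIdeal (algebraMap (𝓞 F) (𝓞 L) ζ) := by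
  have := P.isMaximal
  let _ := Ideal.Quotient.field P.asIdeal
  have prod_eq : algebraMap (𝓞 F) (𝓞 L) ζ * ∏ g : Gal(L/F), g • d = ∏ g : Gal(L/F), g • c := by
    refine RingOfIntegers.coe_injective ?_
    have coe_smulProd : ∏ g : Gal(L/F), g (y : L) = algebraMap F L (ζ : 𝓞 F) := by
      simpa [smulProd_apply, unitHom] using congrArg Units.val hy
    have coe_smul (g : Gal(L/F)) (a : 𝓞 L) : ((g • a : 𝓞 L) : L) = g a := rfl
    simp only [map_mul, map_prod, coe_smul, ← hyd, Finset.prod_mul_distrib, coe_smulProd]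
    rfl
  have mk_d_ne_zero : Ideal.Quotient.mk P.asIdeal d ≠ 0 := Ideal.Quotient.eq_zero_iff_mem.not.2 hd
  refine ⟨Ideal.Quotient.mk P.asIdeal c / Ideal.Quotient.mk P.asIdeal d, ?_⟩
  rw [div_pow, div_eq_iff (pow_ne_zero _ mk_d_ne_zero), ← mk_prod_smul_eq_pow_card F L hP,
    ← mk_prod_smul_eq_pow_card F L hP, ← prod_eq, map_mul]

lemma exists_pow_card_eq_of_smulProd_eq {P : HeightOneSpectrum (𝓞 L)}
    (hP : P.asIdeal.inertia Gal(L/F) = ⊤) {ζ : (𝓞 F)ˣ} {y : Lˣ}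
    (hy : smulProd Gal(L/F) Lˣ y = unitHom F L ζ) :
    ∃ t : 𝓞 L ⧸ P.asIdeal, t ^ Nat.card Gal(L/F) =
      Ideal.Quotient.mk P.asIdeal (algebraMap (𝓞 F) (𝓞 L) ζ) := by
  obtain ⟨c, ⟨d, hd⟩, hyd | hyc⟩ := P.exists_primeCompl_mul_eq_or_mul_eq (y : L)
  · exact exists_pow_card_eq_of_mul_eq F L hP hy hd hyd
  · have := P.isMaximal
    let _ := Ideal.Quotient.field P.asIdeal
    have inv_mul_eq : (y⁻¹ : Lˣ) * algebraMap (𝓞 L) L d = algebraMap (𝓞 L) L c := by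
      rw [← hyc, Units.inv_mul_cancel_left]
    have smulProd_inv : smulProd Gal(L/F) Lˣ y⁻¹ = unitHom F L ζ⁻¹ := by rw [map_inv, hy, map_inv]
    obtain ⟨t, ht⟩ := exists_pow_card_eq_of_mul_eq F L hP smulProd_inv hd inv_mul_eq
    refine ⟨t⁻¹, ?_⟩
    rw [inv_pow, ht]
    refine inv_eq_of_mul_eq_one_right ?_
    rw [← map_mul, ← map_mul, Units.inv_mul, map_one, map_one]

lemma isPrimitiveRoot_algebraMap (F L : Type*) [Field F] [Field L] [Algebra F L] {p : ℕ}
    {ζ : (𝓞 F)ˣ} (hζ : orderOf ζ = p) :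
    IsPrimitiveRoot (algebraMap (𝓞 F) (𝓞 L) ζ) p :=
  (IsPrimitiveRoot.coe_units_iff.2 (IsPrimitiveRoot.iff_orderOf.2 hζ)).map_of_injective
    (FaithfulSMul.algebraMap_injective (𝓞 F) (𝓞 L))

lemma natCast_notMem_of_modEq_one {R : Type*} [CommRing R] {P : Ideal R} (hP : P ≠ ⊤) {N p : ℕ}
    (hN : (N : R) ∈ P) (hNp : N ≡ 1 [MOD p]) : (p : R) ∉ P := by
  intro hp
  obtain ⟨m, hm⟩ := Nat.modEq_iff_dvd.1 hNp
  refine hP ((Ideal.eq_top_iff_one P).2 ?_)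
  have one_eq : (1 : R) = N + p * m := by
    have := congrArg (Int.cast : ℤ → R) hm
    push_cast at this
    linear_combination this
  exact one_eq ▸ P.add_mem hN (P.mul_mem_right _ hp)

lemma sub_one_notMem_of_natCast_notMem {R : Type*} [CommRing R] [IsDomain R] {P : Ideal R}
    {p : ℕ} [hp : Fact p.Prime] {z : R} (hz : IsPrimitiveRoot z p) (hpP : (p : R) ∉ P) :
    z - 1 ∉ P := by
  obtain ⟨u, -, hu⟩ := hz.self_sub_one_pow_dvd_order (Nat.sub_one_lt hp.out.ne_zero)
  intro hzP
  rw [hu] at hpP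
  exact hpP (P.mul_mem_left _ (P.pow_mem_of_mem hzP _ (Nat.sub_pos_of_lt hp.out.one_lt)))

theorem unitHom_notMem_range_smulProd [IsGalois F L] {p : ℕ} [hp : Fact p.Prime]
    (hF : Module.finrank ℚ F < p) (hFL : Module.finrank F L = p) {ζ : (𝓞 F)ˣ} (hζ : orderOf ζ = p)
    {N : ℕ} (hN : N.Prime) (hNp : N ≡ 1 [MOD p]) (hNp2 : ¬ N ≡ 1 [MOD p ^ 2]) {x : 𝓞 L}
    (hx : x ^ p = N) : unitHom F L ζ ∉ (smulProd Gal(L/F) Lˣ).range := by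
  rintro ⟨y, hy⟩
  have rank_eq : Module.finrank ℤ (𝓞 L) = p * Module.finrank ℚ F := by
    rw [RingOfIntegers.rank, ← Module.finrank_mul_finrank ℚ F L, hFL, mul_comm]
  have absNorm_x := absNorm_span_singleton_eq_pow hx hp.out.ne_zero rank_eq
  have span_ne_top : Ideal.span {x} ≠ ⊤ := by
    rw [Ne, ← Ideal.absNorm_eq_one_iff, absNorm_x]
    exact (Nat.one_lt_pow Module.finrank_pos.ne' hN.one_lt).ne'
  obtain ⟨I, hI, hxI⟩ := Ideal.exists_le_maximal _ span_ne_top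
  have span_ne_bot : Ideal.span {x} ≠ ⊥ := by
    rw [Ne, ← Ideal.absNorm_eq_zero_iff, absNorm_x]
    exact pow_ne_zero _ hN.ne_zero
  let P : HeightOneSpectrum (𝓞 L) := ⟨I, hI.isPrime, ne_bot_of_le_ne_bot span_ne_bot hxI⟩
  have hxP : x ∈ P.asIdeal := (Ideal.span_singleton_le_iff_mem _).1 hxI
  have hNP : (N : 𝓞 L) ∈ P.asIdeal := hx ▸ P.asIdeal.pow_mem_of_mem hxP p hp.out.pos
  obtain ⟨t, ht⟩ :=
    exists_pow_card_eq_of_smulProd_eq F L (inertia_eq_top_of_mem F L hFL hF hN hx hxP) hy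
  rw [IsGalois.card_aut_eq_finrank, hFL] at ht
  have hz := isPrimitiveRoot_algebraMap F L hζ
  have order_t : orderOf (t ^ p) = p := by
    refine orderOf_eq_prime ?_ ?_
    · rw [ht, ← map_pow, hz.pow_eq_one, map_one]
    · rw [ht, ← map_one (Ideal.Quotient.mk P.asIdeal), Ne, Ideal.Quotient.eq]
      exact sub_one_notMem_of_natCast_notMem hz
        (natCast_notMem_of_modEq_one P.isPrime.ne_top hNP hNp)
  obtain ⟨f, f_pos, f_le, absNorm_P⟩ := exists_absNorm_eq_pow_of_dvd hN absNorm_x P.isPrime.ne_top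
    (Ideal.dvd_iff_le.2 hxI)
  let _ := Ideal.Quotient.field P.asIdeal
  have := P.asIdeal.finiteQuotientOfFreeOfNeBot P.ne_bot
  rw [Ideal.absNorm_apply, Submodule.cardQuot_apply] at absNorm_P
  exact hNp2 (sq_modEq_one_of_orderOf_pow_eq hp.out absNorm_P hNp
    (Nat.not_dvd_of_pos_of_lt f_pos (f_le.trans_lt hF)) order_t)

end NormResidues

section RadicalExtensions

open NumberField IsDedekindDomain Pointwise

lemma exists_forall_eq_of_sub_one_mem (F : Type*) [Field F] [NumberField F]
    {p : ℕ} [hp : Fact p.Prime] [IsCyclotomicExtension {p} ℚ F]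
    {ζ : (𝓞 F)ˣ} (hζ : orderOf ζ = p) :
    ∃ v : HeightOneSpectrum (𝓞 F), ∀ w : HeightOneSpectrum (𝓞 F),
      (ζ : 𝓞 F) - 1 ∈ w.asIdeal → w = v := by
  have hz : IsPrimitiveRoot ((ζ : 𝓞 F) : F) p :=
    (IsPrimitiveRoot.coe_units_iff.2 (IsPrimitiveRoot.iff_orderOf.2 hζ)).map_of_injective
      RingOfIntegers.coe_injective
  have prime : Prime ((ζ : 𝓞 F) - 1) := hz.zeta_sub_one_prime'
  let v : HeightOneSpectrum (𝓞 F) := ⟨Ideal.span {(ζ : 𝓞 F) - 1},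
    (Ideal.span_singleton_prime prime.ne_zero).2 prime,
    Ideal.span_singleton_eq_bot.not.2 prime.ne_zero⟩
  refine ⟨v, fun w hw ↦ HeightOneSpectrum.ext ?_⟩
  exact (v.isMaximal.eq_of_le w.isPrime.ne_top ((Ideal.span_singleton_le_iff_mem _).2 hw)).symm

variable (F L : Type*) [Field F] [NumberField F] [Field L] [NumberField L] [Algebra F L]
  {p : ℕ} [hp : Fact p.Prime] {N : ℕ} {x : 𝓞 L}

lemma exists_finset_mem_iff_mem (hFL : Module.finrank F L = p) (hN : N.Prime) (hx : x ^ p = N) :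
    ∃ T : Finset (HeightOneSpectrum (𝓞 L)),
      (∀ P, P ∈ T ↔ x ∈ P.asIdeal) ∧ T.card ≤ Module.finrank ℚ F := by
  have rank_eq : Module.finrank ℤ (𝓞 L) = p * Module.finrank ℚ F := by
    rw [RingOfIntegers.rank, ← Module.finrank_mul_finrank ℚ F L, hFL, mul_comm]
  have absNorm_x := absNorm_span_singleton_eq_pow hx hp.out.ne_zero rank_eq
  have span_ne_zero : Ideal.span {x} ≠ 0 := by
    rw [Ne, Ideal.zero_eq_bot, ← Ideal.absNorm_eq_zero_iff, absNorm_x]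
    exact pow_ne_zero _ hN.ne_zero
  refine ⟨(Ideal.finite_factors span_ne_zero).toFinset, fun P ↦ ?_,
    card_le_of_forall_asIdeal_dvd hN absNorm_x fun P hP ↦ ?_⟩
  · rw [Set.Finite.mem_toFinset, Set.mem_ofPred_eq, Ideal.dvd_span_singleton]
  · exact (Ideal.finite_factors span_ne_zero).mem_toFinset.1 hP

variable [IsGalois F L] {ζ : (𝓞 F)ˣ} {σ : Gal(L/F)}

theorem card_fixed_torsion_lt_of_pow_eq [IsCyclotomicExtension {p} ℚ F] (hp2 : 2 < p)
    (hFp : p.Coprime (Nat.card (ClassGroup (𝓞 F)))) (hFL : Module.finrank F L = p)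
    (hζ : orderOf ζ = p) (hσ : ∀ g, g ∈ Subgroup.zpowers σ) (hN : N.Prime) (hNp : N ≡ 1 [MOD p])
    (hx : x ^ p = N) (hσx : σ • x = algebraMap (𝓞 F) (𝓞 L) ζ * x) :
    Nat.card {c : IdealClass L // c ^ p = 1 ∧ σ • c = c} < p ^ (p - 1) := by
  classical
  have hF : Module.finrank ℚ F = p - 1 := by
    rw [IsCyclotomicExtension.Rat.finrank p F, Nat.totient_prime hp.out]
  have hFp_lt : Module.finrank ℚ F < p := hF ▸ Nat.sub_one_lt hp.out.ne_zero
  have := IsCyclotomicExtension.Rat.isTotallyComplex (n := p) F hp2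
  obtain ⟨T, mem_T, card_T⟩ := exists_finset_mem_iff_mem F L hFL hN hx
  by_cases hN2 : N ≡ 1 [MOD p ^ 2]
  · refine card_fixed_torsion_lt F L hF hFp hFL hζ hσ (S := T) (fun v ↦ ?_)
      (relIndex_normUnits_dvd F L hFL hζ) (by lia)
    obtain ⟨P, hP⟩ := exists_heightOneSpectrum_liesOver F L v
    refine ⟨P, hP, or_iff_not_imp_right.2 fun hPT ↦ ?_⟩
    exact inertia_eq_bot_of_sq_modEq_one F L hFL (isPrimitiveRoot_algebraMap F L hζ)
      (smul_algebraMap σ _) hσx hx hN2 ((mem_T P).not.1 hPT)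
  · obtain ⟨v₀, hv₀⟩ := exists_forall_eq_of_sub_one_mem F hζ
    obtain ⟨P₀, hP₀⟩ := exists_heightOneSpectrum_liesOver F L v₀
    refine card_fixed_torsion_lt F L hF hFp hFL hζ hσ (S := insert P₀ T) (fun v ↦ ?_)
      (relIndex_normUnits_dvd_of_not_norm F L hFL hζ
        (unitHom_notMem_range_smulProd F L hFp_lt hFL hζ hN hNp hN2 hx))
      (by have := T.card_insert_le P₀; lia)
    by_cases hv : (ζ : 𝓞 F) - 1 ∈ v.asIdeal
    · exact ⟨P₀, hv₀ v hv ▸ hP₀, .inr (T.mem_insert_self P₀)⟩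
    · obtain ⟨P, hP⟩ := exists_heightOneSpectrum_liesOver F L v
      refine ⟨P, hP, or_iff_not_imp_right.2 fun hPS ↦ ?_⟩
      refine inertia_eq_bot_of_sub_one_notMem F L hFL hσx (fun hzP ↦ hv ?_)
        fun hxP ↦ hPS (Finset.mem_insert_of_mem ((mem_T P).2 hxP))
      rw [Ideal.mem_of_liesOver P.asIdeal v.asIdeal, map_sub, map_one]
      exact hzP

end RadicalExtensions

section Norms

open Polynomial

lemma norm_algebraMap_sub {R S : Type*} [CommRing R] [CommRing S] [Algebra R S] [Module.Free R S]
    [Module.Finite R S] (c : R) (x : S) :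
    Algebra.norm R (algebraMap R S c - x) = (Algebra.lmul R S x).charpoly.eval c := by
  rw [LinearMap.eval_charpoly, Algebra.norm_apply, map_sub, AlgHom.commutes]

lemma norm_algebraMap_add_of_isNilpotent {R S : Type*} [CommRing R] [IsDomain R] [CommRing S]
    [Algebra R S] [Module.Free R S] [Module.Finite R S] (c : R) {x : S} (hx : IsNilpotent x) :
    Algebra.norm R (algebraMap R S c + x) = c ^ Module.finrank R S := by
  rw [← sub_neg_eq_add, norm_algebraMap_sub,
    (hx.neg.map (Algebra.lmul R S)).charpoly_eq_X_pow_finrank, eval_pow, eval_X]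

lemma norm_algebraMap_sub_eq_eval {k A : Type*} [Field k] [CommRing A] [Nontrivial A] [Algebra k A]
    [Module.Finite k A] {f : k[X]} (hf : Irreducible f) (hf' : f.Monic)
    (hfA : f.natDegree = Module.finrank k A) {x : A} (hx : aeval x f = 0) (c : k) :
    Algebra.norm k (algebraMap k A c - x) = f.eval c := by
  have lmul_root : aeval (Algebra.lmul k A x) f = 0 := by
    rw [aeval_algHom_apply, hx, map_zero]
  have f_dvd : f ∣ (Algebra.lmul k A x).charpoly :=
    minpoly.eq_of_irreducible_of_monic hf lmul_root hf' ▸ LinearMap.minpoly_dvd_charpoly _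
  rw [norm_algebraMap_sub, eq_of_monic_of_dvd_of_natDegree_le hf' (LinearMap.charpoly_monic _)
    f_dvd (by rw [LinearMap.charpoly_natDegree, hfA])]

lemma norm_one_tmul {R S : Type*} [CommRing R] [CommRing S] [Algebra R S] [Module.Free R S]
    [Module.Finite R S] (A : Type*) [CommRing A] [Algebra R A] (x : S) :
    Algebra.norm A (1 ⊗ₜ[R] x : A ⊗[R] S) = algebraMap R A (Algebra.norm R x) := by
  rw [Algebra.norm_apply, Algebra.norm_apply, ← Algebra.baseChange_lmul, LinearMap.det_baseChange]

variable {S : Type*} [CommRing S] [Module.Free ℤ S] [Module.Finite ℤ S] {p N : ℕ}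

lemma one_tmul_intCast (A S : Type*) [CommRing A] [CommRing S] (c : ℤ) :
    (1 ⊗ₜ[ℤ] (c : S) : A ⊗[ℤ] S) = algebraMap A (A ⊗[ℤ] S) c := by
  rw [map_intCast]
  exact map_intCast Algebra.TensorProduct.includeRight c

lemma intCast_norm_intCast_add [hN : Fact N.Prime] {x : S} {m : ℕ} (hx : (N : S) ∣ x ^ m) (c : ℤ) :
    ((Algebra.norm ℤ (c + x) : ℤ) : ZMod N) = (c : ZMod N) ^ Module.finrank ℤ S := by
  have nilpotent : IsNilpotent (1 ⊗ₜ[ℤ] x : ZMod N ⊗[ℤ] S) := by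
    obtain ⟨y, hy⟩ := hx
    refine ⟨m, ?_⟩
    rw [Algebra.TensorProduct.tmul_pow, one_pow, hy, ← nsmul_eq_mul, TensorProduct.tmul_smul,
      TensorProduct.smul_tmul', nsmul_one, CharP.cast_eq_zero, TensorProduct.zero_tmul]
  rw [← eq_intCast (algebraMap ℤ (ZMod N)), ← norm_one_tmul, TensorProduct.tmul_add,
    one_tmul_intCast, norm_algebraMap_add_of_isNilpotent _ nilpotent, Module.finrank_baseChange]

lemma irreducible_X_pow_sub_C_natCast (hp : p.Prime) (hN : N.Prime) :
    Irreducible (X ^ p - C (N : ℚ)) := by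
  refine X_pow_sub_C_irreducible_of_prime hp fun b hb ↦ ?_
  obtain ⟨z, rfl⟩ := IsIntegrallyClosed.isIntegral_iff.1
    (IsIntegral.of_pow hp.pos (hb ▸ isIntegral_natCast N) : IsIntegral ℤ b)
  have z_pow : z ^ p = N := by
    rw [eq_intCast] at hb
    exact_mod_cast hb
  exact not_irreducible_pow hp.ne_one (z_pow ▸ (Nat.prime_iff_prime_int.1 hN).irreducible)

lemma norm_intCast_sub_of_pow_eq [Nontrivial S] (hp : p.Prime) (hN : N.Prime)
    (hS : Module.finrank ℤ S = p) {a : S} (ha : a ^ p = N) (c : ℤ) :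
    Algebra.norm ℤ (c - a) = c ^ p - N := by
  have root : aeval (1 ⊗ₜ[ℤ] a : ℚ ⊗[ℤ] S) (X ^ p - C (N : ℚ)) = 0 := by
    rw [map_sub, map_pow, aeval_X, aeval_C, Algebra.TensorProduct.tmul_pow, one_pow, ha,
      ← Int.cast_natCast (R := S), one_tmul_intCast, Int.cast_natCast, sub_self]
  have eval_eq := norm_algebraMap_sub_eq_eval (irreducible_X_pow_sub_C_natCast hp hN)
    (monic_X_pow_sub_C _ hp.ne_zero)
    (by rw [natDegree_X_pow_sub_C, Module.finrank_baseChange, hS]) root c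
  rw [← one_tmul_intCast, ← TensorProduct.tmul_sub, norm_one_tmul] at eval_eq
  rw [eval_sub, eval_pow, eval_X, eval_C, eq_intCast] at eval_eq
  exact_mod_cast eval_eq

end Norms

section PowerResidues

variable {n p N : ℕ}

lemma IsPthPow.natAbs (hn : Odd n) {c : ℤ} (hc : IsPthPow n (c : ZMod N)) :
    IsPthPow n (c.natAbs : ZMod N) := by
  obtain ⟨y, hy⟩ := hc
  rcases Int.natAbs_eq c with hc | hc
  · exact ⟨y, by rw [hy, hc, Int.cast_natCast, Int.natAbs_natCast]⟩
  · exact ⟨-y, by rw [hn.neg_pow, hy, hc, Int.cast_neg, neg_neg, Int.cast_natCast, Int.natAbs_neg,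
      Int.natAbs_natCast]⟩

/-- The prime-to-`N` part of a natural number, reduced modulo `N`. -/
def unitResidue (N : ℕ) : ℕ →* ZMod N where
  toFun m := (ordCompl[N] m : ℕ)
  map_one' := by rw [Nat.factorization_one, Finsupp.zero_apply, pow_zero, Nat.div_one, Nat.cast_one]
  map_mul' a b := by rw [Nat.ordCompl_mul, Nat.cast_mul]

lemma unitResidue_self (hN : N.Prime) : unitResidue N N = 1 := by
  have ordCompl_self := Nat.ordCompl_self_pow (k := 1) hN
  rw [pow_one] at ordCompl_self
  exact (congrArg Nat.cast ordCompl_self).trans Nat.cast_one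

lemma unitResidue_of_not_dvd (hN : N.Prime) {m : ℕ} (hm : ¬ N ∣ m) : unitResidue N m = m :=
  congrArg Nat.cast ((Nat.ordCompl_eq_self_iff_zero_or_not_dvd m hN).2 (.inr hm))

lemma unitResidue_ne_zero (hN : N.Prime) {m : ℕ} (hm : m ≠ 0) : unitResidue N m ≠ 0 :=
  (ZMod.natCast_eq_zero_iff _ _).not.2 (Nat.not_dvd_ordCompl hN hm)

lemma exists_unit_not_isPthPow (hp : p.Prime) (hN : N.Prime) (hNp : N ≡ 1 [MOD p]) :
    ∃ g : (ZMod N)ˣ, ¬ IsPthPow p (g : ZMod N) := by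
  have : Fact p.Prime := ⟨hp⟩
  have : Fact N.Prime := ⟨hN⟩
  have p_dvd_card : p ∣ Nat.card (ZMod N)ˣ := by
    rw [Nat.card_eq_fintype_card, ZMod.card_units]
    exact (Nat.modEq_iff_dvd' hN.one_le).1 hNp.symm
  obtain ⟨x, hx⟩ := exists_prime_orderOf_dvd_card' p p_dvd_card
  have not_surjective : ¬ Function.Surjective fun u : (ZMod N)ˣ ↦ u ^ p := by
    rw [← Finite.injective_iff_surjective]
    intro h
    have x_eq_one : x = 1 := h (by simp only [← hx, pow_orderOf_eq_one, one_pow])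
    rw [x_eq_one, orderOf_one] at hx
    exact hp.ne_one hx.symm
  obtain ⟨g, hg⟩ := not_forall.1 not_surjective
  refine ⟨g, fun ⟨y, hy⟩ ↦ ?_⟩
  have y_ne_zero : y ≠ 0 := by
    rintro rfl
    exact g.ne_zero (by rw [← hy, zero_pow hp.ne_zero])
  exact hg ⟨Units.mk0 y y_ne_zero, Units.ext hy⟩

lemma exists_prime_natCast_eq_natCast_eq {m n : ℕ} [NeZero m] [NeZero n] (hmn : m.Coprime n)
    (u : (ZMod m)ˣ) (v : (ZMod n)ˣ) :
    ∃ q : ℕ, q.Prime ∧ (q : ZMod m) = u ∧ (q : ZMod n) = v := by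
  have unit : IsUnit ((ZMod.chineseRemainder hmn).symm (u, v)) :=
    (Prod.isUnit_iff.2 ⟨u.isUnit, v.isUnit⟩).map _
  obtain ⟨q, -, hq, hquv⟩ := Nat.forall_exists_prime_gt_and_eq_mod unit 0
  rw [RingEquiv.eq_symm_apply, map_natCast] at hquv
  exact ⟨q, hq, congrArg Prod.fst hquv, congrArg Prod.snd hquv⟩

lemma exists_prime_not_isPthPow (hp : p.Prime) (hN : N.Prime) (hNp : N ≡ 1 [MOD p]) :
    ∃ q : ℕ, q.Prime ∧ (q : ZMod p) = -1 ∧ ¬ IsPthPow p (q : ZMod N) := by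
  have : NeZero p := ⟨hp.ne_zero⟩
  have : NeZero N := ⟨hN.ne_zero⟩
  have coprime : p.Coprime N := by
    refine (Nat.coprime_primes hp hN).2 ?_
    rintro rfl
    exact hp.not_dvd_one ((hNp.dvd_iff dvd_rfl).1 dvd_rfl)
  obtain ⟨g, hg⟩ := exists_unit_not_isPthPow hp hN hNp
  obtain ⟨q, hq, hqp, hqg⟩ := exists_prime_natCast_eq_natCast_eq coprime (-1) g
  exact ⟨q, hq, by rw [hqp, Units.val_neg, Units.val_one], hqg ▸ hg⟩

lemma exists_dvd_pow_sub_not_sq_dvd {q : ℕ} (hp : p.Prime) (hp2 : p ≠ 2) (hq : q.Prime)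
    (hqp : (q : ZMod p) = -1) {m : ℕ} (hm : ¬ q ∣ m) :
    ∃ c : ℤ, (q : ℤ) ∣ c ^ p - m ∧ ¬ (q : ℤ) ^ 2 ∣ c ^ p - m := by
  have : Fact p.Prime := ⟨hp⟩
  have : NeZero (q ^ 2) := ⟨pow_ne_zero 2 hq.ne_zero⟩
  have coprime_card : (Nat.card (ZMod (q ^ 2))ˣ).Coprime p := by
    rw [Nat.card_eq_fintype_card, ZMod.card_units_eq_totient, Nat.totient_prime_pow hq two_pos,
      Nat.coprime_comm, hp.coprime_iff_not_dvd, ← CharP.cast_eq_zero_iff (ZMod p), Nat.cast_mul,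
      Nat.cast_sub hq.one_le, Nat.cast_pow, hqp]
    intro h
    have two_eq_zero : ((2 : ℕ) : ZMod p) = 0 := by
      push_cast at h ⊢
      linear_combination h
    rw [CharP.cast_eq_zero_iff _ p, Nat.prime_dvd_prime_iff_eq hp Nat.prime_two] at two_eq_zero
    exact hp2 two_eq_zero
  have coprime : (m + q).Coprime (q ^ 2) :=
    ((Nat.coprime_add_self_left).2 ((hq.coprime_iff_not_dvd.2 hm).symm)).pow_right 2
  obtain ⟨u, hu⟩ := (powCoprime coprime_card).surjective (ZMod.unitOfCoprime _ coprime)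
  obtain ⟨c, hc⟩ := ZMod.intCast_surjective (u : ZMod (q ^ 2))
  have sq_dvd : (q : ℤ) ^ 2 ∣ c ^ p - m - q := by
    have eq := congrArg Units.val hu
    rw [powCoprime_apply, Units.val_pow_eq_pow_val, ← hc, ZMod.coe_unitOfCoprime] at eq
    have cast_eq_zero : ((c ^ p - m - q : ℤ) : ZMod (q ^ 2)) = 0 := by
      push_cast at eq ⊢
      linear_combination eq
    exact_mod_cast (ZMod.intCast_zmod_eq_zero_iff_dvd _ _).1 cast_eq_zero
  refine ⟨c, (dvd_sub_self_right).1 ((dvd_pow_self _ two_ne_zero).trans sq_dvd), fun h ↦ ?_⟩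
  have sq_dvd_self : q ^ 2 ∣ q ^ 1 := by
    rw [pow_one]
    exact_mod_cast (dvd_sub_right h).1 sq_dvd
  exact absurd ((Nat.pow_dvd_pow_iff_le_right hq.one_lt).1 sq_dvd_self) (by decide)

end PowerResidues

section LowerBound

open nonZeroDivisors

lemma intCast_surjective_of_prime_card {R : Type*} [CommRing R] (hR : (Nat.card R).Prime) :
    Function.Surjective (Int.cast : ℤ → R) := by
  have : Fact (Nat.card R).Prime := ⟨hR⟩
  have : Finite R := Nat.finite_of_card_ne_zero hR.ne_zero
  have : Nontrivial R := Finite.one_lt_card_iff_nontrivial.1 hR.one_lt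
  refine (AddMonoidHom.range_eq_top (f := Int.castAddHom R)).1 ?_
  refine (AddSubgroup.eq_bot_or_eq_top_of_prime_card _).resolve_left fun h ↦ ?_
  exact one_ne_zero ((AddSubgroup.mem_bot (G := R)).1 (h ▸ ⟨1, Int.cast_one⟩))

variable {S : Type*} [CommRing S] [IsDedekindDomain S] [Module.Free ℤ S] {n p N : ℕ} {a : S}

lemma exists_dvd_sub_intCast_of_prime_absNorm (ha : (Ideal.absNorm (Ideal.span {a})).Prime)
    (x : S) : ∃ c : ℤ, a ∣ x - c := by
  rw [Ideal.absNorm_apply, Submodule.cardQuot_apply] at ha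
  obtain ⟨c, hc⟩ := intCast_surjective_of_prime_card ha (Ideal.Quotient.mk _ x)
  refine ⟨c, ?_⟩
  rw [← map_intCast (Ideal.Quotient.mk (Ideal.span {a})), eq_comm,
    Ideal.Quotient.mk_eq_mk_iff_sub_mem, Ideal.mem_span_singleton] at hc
  exact hc

variable [Module.Finite ℤ S]

lemma isPthPow_unitResidue_absNorm_of_not_dvd (hN : N.Prime) (hn : Odd n)
    (hS : Module.finrank ℤ S = n) (ha : a ^ n = N) (haN : Ideal.absNorm (Ideal.span {a}) = N)
    {x : S} (hx : ¬ a ∣ x) : IsPthPow n (unitResidue N (Ideal.absNorm (Ideal.span {x}))) := by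
  have : Fact N.Prime := ⟨hN⟩
  obtain ⟨c, y, hy⟩ := exists_dvd_sub_intCast_of_prime_absNorm (haN.symm ▸ hN) x
  rw [sub_eq_iff_eq_add'] at hy
  subst hy
  have norm_eq : ((Algebra.norm ℤ (c + a * y) : ℤ) : ZMod N) = (c : ZMod N) ^ n := by
    rw [intCast_norm_intCast_add (m := n) (by rw [mul_pow, ha]; exact dvd_mul_right _ _), hS]
  have not_dvd : ¬ N ∣ Ideal.absNorm (Ideal.span {c + a * y}) := by
    rw [Ideal.absNorm_span_singleton, ← Int.natCast_dvd, ← ZMod.intCast_zmod_eq_zero_iff_dvd,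
      norm_eq, pow_eq_zero_iff hn.pos.ne', ZMod.intCast_zmod_eq_zero_iff_dvd]
    rintro ⟨d, rfl⟩
    refine hx (dvd_add ?_ (dvd_mul_right a y))
    rw [Int.cast_mul, Int.cast_natCast, ← ha]
    exact (dvd_pow_self a hn.pos.ne').mul_right _
  rw [unitResidue_of_not_dvd hN not_dvd, Ideal.absNorm_span_singleton]
  exact IsPthPow.natAbs hn ⟨c, norm_eq.symm⟩

lemma isPthPow_unitResidue_absNorm (hN : N.Prime) (hn : Odd n) (hS : Module.finrank ℤ S = n)
    (ha : a ^ n = N) {x : S} (hx : x ≠ 0) :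
    IsPthPow n (unitResidue N (Ideal.absNorm (Ideal.span {x}))) := by
  have absNorm_a : Ideal.absNorm (Ideal.span {a}) = N := by
    rw [absNorm_span_singleton_eq_pow ha hn.pos.ne' (hS.trans (mul_one n).symm), pow_one]
  have not_isUnit : ¬ IsUnit a := by
    rw [← Ideal.span_singleton_eq_top, ← Ideal.absNorm_eq_one_iff, absNorm_a]
    exact hN.ne_one
  obtain ⟨z, hxz, hz⟩ :=
    (FiniteMultiplicity.of_not_isUnit not_isUnit hx).exists_eq_pow_mul_and_not_dvd
  rw [hxz, ← Ideal.span_singleton_mul_span_singleton, ← Ideal.span_singleton_pow, map_mul, map_pow,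
    absNorm_a, map_mul, map_pow, unitResidue_self hN, one_pow, one_mul]
  exact isPthPow_unitResidue_absNorm_of_not_dvd hN hn hS ha absNorm_a hz

lemma isPthPow_unitResidue_absNorm_of_mk0_eq_pow (hN : N.Prime) (hn : Odd n)
    (hS : Module.finrank ℤ S = n) (ha : a ^ n = N) {I : (Ideal S)⁰} {c : ClassGroup S}
    (hc : c ^ n = ClassGroup.mk0 I) : IsPthPow n (unitResidue N (Ideal.absNorm (I : Ideal S))) := by
  have : Fact N.Prime := ⟨hN⟩
  obtain ⟨J, rfl⟩ := ClassGroup.mk0_surjective c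
  rw [← map_pow, ClassGroup.mk0_eq_mk0_iff] at hc
  obtain ⟨x, y, hx, hy, hxy⟩ := hc
  obtain ⟨s, hs⟩ := isPthPow_unitResidue_absNorm hN hn hS ha hx
  obtain ⟨t, ht⟩ := isPthPow_unitResidue_absNorm hN hn hS ha hy
  have t_ne_zero : t ^ n ≠ 0 := by
    rw [ht]
    exact unitResidue_ne_zero hN fun h ↦
      hy (Ideal.span_singleton_eq_bot.1 (Ideal.absNorm_eq_zero_iff.1 h))
  refine ⟨s * unitResidue N (Ideal.absNorm (J : Ideal S)) / t, ?_⟩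
  have absNorm_eq := congrArg (fun I ↦ unitResidue N (Ideal.absNorm I)) hxy
  simp only [map_mul, SubmonoidClass.coe_pow, map_pow, ← hs, ← ht] at absNorm_eq
  rw [div_pow, mul_pow, absNorm_eq, mul_div_cancel_left₀ _ t_ne_zero]

lemma exists_absNorm_eq_of_pow_eq (hp : p.Prime) (hp2 : p ≠ 2) (hN : N.Prime)
    (hS : Module.finrank ℤ S = p) (ha : a ^ p = N) {q : ℕ} (hq : q.Prime)
    (hqp : (q : ZMod p) = -1) (hqN : q ≠ N) : ∃ P : Ideal S, Ideal.absNorm P = q := by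
  obtain ⟨c, hqc, hqc2⟩ := exists_dvd_pow_sub_not_sq_dvd hp hp2 hq hqp
    (fun h ↦ hqN ((Nat.prime_dvd_prime_iff_eq hq hN).1 h))
  have absNorm_eq : Ideal.absNorm (Ideal.span {c - a}) = (c ^ p - N : ℤ).natAbs := by
    rw [Ideal.absNorm_span_singleton, norm_intCast_sub_of_pow_eq hp hN hS ha]
  obtain ⟨P, hP, hPq, hPdvd⟩ := Ideal.exists_isMaximal_dvd_of_dvd_absNorm' hq
    (Ideal.span {c - a}) (absNorm_eq ▸ Int.natCast_dvd.1 hqc)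
  have q_mem : (q : S) ∈ P := by
    have : (q : ℤ) ∈ P.under ℤ := hPq ▸ Ideal.mem_span_singleton_self _
    simpa using this
  obtain ⟨f, one_le_f, -, hf⟩ := exists_absNorm_eq_pow_of_dvd hq
    (absNorm_span_singleton_eq_pow (x := (q : S)) (pow_one _) one_ne_zero (one_mul _).symm)
    hP.ne_top (Ideal.dvd_span_singleton.2 q_mem)
  have f_lt_two : f < 2 := by
    by_contra! two_le_f
    have absNorm_dvd := map_dvd Ideal.absNorm hPdvd
    rw [absNorm_eq, hf, ← Int.natCast_dvd, Nat.cast_pow] at absNorm_dvd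
    exact hqc2 ((pow_dvd_pow _ two_le_f).trans absNorm_dvd)
  exact ⟨P, by rw [hf, show f = 1 by lia, pow_one]⟩

lemma one_le_pRank_classGroup_of_pow_eq [Finite (ClassGroup S)] (hp : p.Prime) (hp2 : p ≠ 2)
    (hN : N.Prime) (hNp : N ≡ 1 [MOD p]) (hS : Module.finrank ℤ S = p) (ha : a ^ p = N) :
    1 ≤ pRank p (ClassGroup S) := by
  have : Fact p.Prime := ⟨hp⟩
  obtain ⟨q, hq, hqp, hqN⟩ := exists_prime_not_isPthPow hp hN hNp
  have q_ne_N : q ≠ N := by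
    rintro rfl
    exact hqN ⟨0, by rw [zero_pow hp.ne_zero, CharP.cast_eq_zero]⟩
  obtain ⟨P, hP⟩ := exists_absNorm_eq_of_pow_eq hp hp2 hN hS ha hq hqp q_ne_N
  have P_ne_zero : P ∈ (Ideal S)⁰ := by
    rw [← Ideal.absNorm_ne_zero_iff_mem_nonZeroDivisors, hP]
    exact hq.ne_zero
  refine one_le_pRank_of_forall_pow_ne (g := ClassGroup.mk0 ⟨P, P_ne_zero⟩) fun c hc ↦ hqN ?_
  have isPthPow := isPthPow_unitResidue_absNorm_of_mk0_eq_pow hN (hp.odd_of_ne_two hp2) hS ha hc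
  rwa [hP, unitResidue_of_not_dvd hN
    fun h ↦ q_ne_N ((Nat.prime_dvd_prime_iff_eq hN hq).1 h).symm] at isPthPow

end LowerBound

section Tower

open Polynomial IntermediateField IsCyclotomicExtension

lemma minpoly_zeta_dvd_cyclotomic (n : ℕ) [NeZero n] (K L : Type*) [Field K] [Field L] [Algebra K L]
    [IsCyclotomicExtension {n} K L] [NeZero (n : L)] :
    minpoly K (zeta n K L) ∣ cyclotomic n K := by
  apply minpoly.dvd
  rw [aeval_def, eval₂_eq_eval_map, map_cyclotomic]
  exact zeta_isRoot n K L

lemma natDegree_minpoly_zeta (n : ℕ) [NeZero n] (K L : Type*) [Field K] [Field L] [Algebra K L]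
    [IsCyclotomicExtension {n} K L] :
    (minpoly K (zeta n K L)).natDegree = Module.finrank K L := by
  rw [← (zeta_spec n K L).powerBasis_gen K, ((zeta_spec n K L).powerBasis K).natDegree_minpoly,
    PowerBasis.finrank]

lemma finrank_le_totient (n : ℕ) [NeZero n] (K L : Type*) [Field K] [Field L] [Algebra K L]
    [IsCyclotomicExtension {n} K L] [NeZero (n : L)] : Module.finrank K L ≤ n.totient := by
  rw [← natDegree_minpoly_zeta n K L, ← natDegree_cyclotomic n K]
  exact natDegree_le_of_dvd (minpoly_zeta_dvd_cyclotomic n K L) (cyclotomic_ne_zero n K)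

lemma irreducible_cyclotomic_of_finrank_eq_totient {n : ℕ} [NeZero n] {K : Type*} (L : Type*)
    [Field K] [Field L] [Algebra K L] [IsCyclotomicExtension {n} K L] [NeZero (n : L)]
    (h : Module.finrank K L = n.totient) : Irreducible (cyclotomic n K) := by
  have : FiniteDimensional K L := finiteDimensional {n} K L
  have integral : IsIntegral K (zeta n K L) := Algebra.IsIntegral.isIntegral _
  rw [eq_of_monic_of_dvd_of_natDegree_le (minpoly.monic integral) (cyclotomic.monic n K)
    (minpoly_zeta_dvd_cyclotomic n K L)
    (by rw [natDegree_cyclotomic, natDegree_minpoly_zeta, h])]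
  exact minpoly.irreducible integral

lemma finrank_eq_of_coprime_of_le (k F K L : Type*) [Field k] [Field F] [Field K] [Field L]
    [Algebra k F] [Algebra k K] [Algebra k L] [Algebra F L] [Algebra K L] [IsScalarTower k F L]
    [IsScalarTower k K L] [FiniteDimensional k L]
    (hFK : (Module.finrank k F).Coprime (Module.finrank k K))
    (hKL : Module.finrank K L ≤ Module.finrank k F) :
    Module.finrank K L = Module.finrank k F ∧ Module.finrank F L = Module.finrank k K := by
  have eq := (Module.finrank_mul_finrank k F L).trans (Module.finrank_mul_finrank k K L).symm
  have : FiniteDimensional K L := .right k K L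
  have finrank_pos : 0 < Module.finrank K L := Module.finrank_pos
  have finrank_eq := hKL.antisymm
    (Nat.le_of_dvd finrank_pos (hFK.dvd_of_dvd_mul_left (Dvd.intro _ eq)))
  refine ⟨finrank_eq, Nat.eq_of_mul_eq_mul_left finrank_pos ?_⟩
  rw [mul_comm _ (Module.finrank k K), ← eq, finrank_eq]

lemma irreducible_X_pow_sub_C_algebraMap {k F : Type*} [Field k] [Field F] [Algebra k F] {p : ℕ}
    (hp : p.Prime) {a : k} (ha : Irreducible (X ^ p - C a)) (hpF : ¬ p ∣ Module.finrank k F) :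
    Irreducible (X ^ p - C (algebraMap k F a)) := by
  refine X_pow_sub_C_irreducible_of_prime hp fun b hb ↦ hpF ?_
  have minpoly_eq : X ^ p - C a = minpoly k b :=
    minpoly.eq_of_irreducible_of_monic ha (by rw [map_sub, map_pow, aeval_X, aeval_C, hb, sub_self])
      (monic_X_pow_sub_C a hp.ne_zero)
  rw [← natDegree_X_pow_sub_C (n := p) (r := a), minpoly_eq]
  exact minpoly.degree_dvd (minpoly.ne_zero_iff.1 (minpoly_eq ▸ ha.ne_zero))

section Kummer

variable {F L : Type*} [Field F] [Field L] [Algebra F L] {p : ℕ} {a : F} {x : L}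

lemma exists_generator_apply_eq_mul [NeZero p] (ha : Irreducible (X ^ p - C a))
    [IsSplittingField F L (X ^ p - C a)] {ζ : F} (hζ : IsPrimitiveRoot ζ p)
    (hx : x ^ p = algebraMap F L a) :
    ∃ σ : Gal(L/F), (∀ g, g ∈ Subgroup.zpowers σ) ∧ σ x = algebraMap F L ζ * x := by
  let e := autEquivZmod ha L hζ
  refine ⟨e.symm (.ofAdd 1), fun g ↦ ?_, ?_⟩
  · obtain ⟨z, hz⟩ := ZMod.intCast_surjective (e g).toAdd
    refine ⟨z, ?_⟩
    simp only [← map_zpow, ← ofAdd_zsmul, zsmul_one, hz, ofAdd_toAdd, MulEquiv.symm_apply_apply]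
  · have apply_eq := autEquivZmod_symm_apply_natCast ha L hx hζ 1
    rwa [Nat.cast_one, pow_one, Algebra.smul_def] at apply_eq

variable [FiniteDimensional F L]

lemma adjoin_root_X_pow_sub_C_eq_top (ha : Irreducible (X ^ p - C a))
    (hFL : Module.finrank F L = p) (hx : x ^ p = algebraMap F L a) : F⟮x⟯ = ⊤ := by
  have p_ne_zero : p ≠ 0 := hFL ▸ Module.finrank_pos.ne'
  refine (Field.primitive_element_iff_minpoly_natDegree_eq F x).2 ?_
  rw [← minpoly.eq_of_irreducible_of_monic ha
    (by rw [map_sub, map_pow, aeval_X, aeval_C, hx, sub_self]) (monic_X_pow_sub_C a p_ne_zero),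
    natDegree_X_pow_sub_C, hFL]

lemma isSplittingField_X_pow_sub_C (ha : Irreducible (X ^ p - C a)) (hFL : Module.finrank F L = p)
    {ζ : F} (hζ : IsPrimitiveRoot ζ p) (hx : x ^ p = algebraMap F L a) :
    IsSplittingField F L (X ^ p - C a) := by
  have p_pos : 0 < p := hFL ▸ Module.finrank_pos
  have adjoin_eq_top := adjoin_root_X_pow_sub_C_eq_top ha hFL hx
  subst hFL
  exact isSplittingField_X_pow_sub_C_of_root_adjoin_eq_top
    ⟨ζ, (mem_primitiveRoots p_pos).2 hζ⟩ hx adjoin_eq_top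

end Kummer

lemma algEquiv_pow_apply_of_apply_eq_mul {F L : Type*} [Field F] [Field L] [Algebra F L]
    {σ : Gal(L/F)} {c : F} {x : L} (hx : σ x = algebraMap F L c * x) (n : ℕ) :
    (σ ^ n) x = algebraMap F L c ^ n * x := by
  induction n with
  | zero => rw [pow_zero, AlgEquiv.one_apply, pow_zero, one_mul]
  | succ n ih =>
    rw [pow_succ, AlgEquiv.mul_apply, hx, map_mul, AlgEquiv.commutes, ih, pow_succ', mul_assoc]

lemma exists_algEquiv_forall_apply_eq_pow {n : ℕ} [NeZero n] {K L : Type*} [Field K] [Field L]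
    [Algebra K L] [IsCyclotomicExtension {n} K L]
    (hirr : Irreducible (cyclotomic n K)) {g : ℕ} (hg : g.Coprime n) :
    ∃ δ : Gal(L/K), ∀ w : L, w ^ n = 1 → δ w = w ^ g := by
  have zeta_pow := (zeta_spec n K L).pow_of_coprime g hg
  refine ⟨fromZetaAut zeta_pow hirr, fun w hw ↦ ?_⟩
  obtain ⟨j, -, rfl⟩ := (zeta_spec n K L).eq_pow_of_pow_eq_one hw
  rw [map_pow, fromZetaAut_spec, pow_right_comm]

lemma ringHom_ext_of_adjoin_eq_top {n : ℕ} [NeZero n] {F L M : Type*} [Field F] [Field L] [Field M]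
    [CharZero F] [CharZero M] [Algebra F L] [IsCyclotomicExtension {n} ℚ F] {ζ : F}
    (hζ : IsPrimitiveRoot ζ n) {x : L} (hx : F⟮x⟯ = ⊤) {φ ψ : L →+* M}
    (hφζ : φ (algebraMap F L ζ) = ψ (algebraMap F L ζ)) (hφx : φ x = ψ x) : φ = ψ := by
  have eq_on_F : φ.comp (algebraMap F L) = ψ.comp (algebraMap F L) := by
    have algHom_eq :
        (φ.comp (algebraMap F L)).toRatAlgHom = (ψ.comp (algebraMap F L)).toRatAlgHom :=
      (hζ.powerBasis ℚ).algHom_ext (by rw [hζ.powerBasis_gen ℚ]; exact hφζ)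
    exact congrArg AlgHom.toRingHom algHom_eq
  have closure_le : Subfield.closure (Set.range (algebraMap F L) ∪ {x}) ≤ φ.eqLocusField ψ := by
    rw [Subfield.closure_le]
    rintro _ (⟨y, rfl⟩ | rfl)
    · exact DFunLike.congr_fun eq_on_F y
    · exact hφx
  rw [← adjoin_toSubfield, hx] at closure_le
  exact RingHom.ext fun y ↦ closure_le (mem_top (F := F) (x := y))

lemma exists_coprime_injOn_pow (p : ℕ) [Fact p.Prime] :
    ∃ g : ℕ, g.Coprime p ∧ Set.InjOn (fun i ↦ (g : ZMod p) ^ i) (Set.Iio (p - 1)) := by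
  obtain ⟨u, hu⟩ := IsCyclic.exists_generator (α := (ZMod p)ˣ)
  refine ⟨(u : ZMod p).val, ZMod.val_coe_unit_coprime u, ?_⟩
  rw [ZMod.natCast_zmod_val]
  have orderOf_u : orderOf (u : ZMod p) = p - 1 := by
    rw [orderOf_units, orderOf_eq_card_of_forall_mem_zpowers hu, Nat.card_eq_fintype_card,
      ZMod.card_units]
  exact orderOf_u ▸ pow_injOn_Iio_orderOf

end Tower

section UpperBound

open NumberField Polynomial IntermediateField

lemma classRank_lt_of_isGalois {F K L : Type*} [Field F] [NumberField F] [Field K] [NumberField K]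
    [Field L] [NumberField L] [Algebra F L] [Algebra K L] {p N : ℕ} [Fact p.Prime] (hp2 : 2 < p)
    [IsCyclotomicExtension {p} ℚ F] [IsCyclotomicExtension {p} K L] [IsGalois F L]
    (hF : p.Coprime (Nat.card (ClassGroup (𝓞 F)))) (hFL : Module.finrank F L = p)
    (hKL : Module.finrank K L = p - 1) (hN : N.Prime) (hNp : N ≡ 1 [MOD p]) {α : K}
    (hα : α ^ p = N) {ζ : F} (hζ : IsPrimitiveRoot ζ p) {σ : Gal(L/F)}
    (hσ : ∀ g, g ∈ Subgroup.zpowers σ) (htop : F⟮algebraMap K L α⟯ = ⊤)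
    (hσα : σ (algebraMap K L α) = algebraMap F L ζ * algebraMap K L α) :
    classRank p K < p - 1 := by
  have hp : p.Prime := Fact.out
  obtain ⟨g, g_coprime, g_injOn⟩ := exists_coprime_injOn_pow p
  have irreducible := irreducible_cyclotomic_of_finrank_eq_totient L
    (hKL.trans (Nat.totient_prime hp).symm)
  obtain ⟨δ, hδ⟩ := exists_algEquiv_forall_apply_eq_pow (L := L) irreducible g_coprime
  have zeta_pow : algebraMap F L ζ ^ p = 1 := by rw [← map_pow, hζ.pow_eq_one, map_one]
  have semilinear :
      (δ : L →+* L).comp σ = ((σ ^ g : Gal(L/F)) : L →+* L).comp (δ : L →+* L) := by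
    refine ringHom_ext_of_adjoin_eq_top hζ htop ?_ ?_
    · change δ (σ (algebraMap F L ζ)) = (σ ^ g) (δ (algebraMap F L ζ))
      rw [AlgEquiv.commutes, hδ _ zeta_pow, ← map_pow, AlgEquiv.commutes]
    · change δ (σ (algebraMap K L α)) = (σ ^ g) (δ (algebraMap K L α))
      rw [hσα, map_mul, AlgEquiv.commutes, hδ _ zeta_pow, algEquiv_pow_apply_of_apply_eq_mul hσα]
  have α_integral : IsIntegral ℤ (algebraMap K L α) :=
    .of_pow hp.pos (by rw [← map_pow, hα, map_natCast]; exact isIntegral_natCast N)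
  have unit_primitive :=
    IsPrimitiveRoot.isUnit_unit hp.ne_zero hζ.toInteger_isPrimitiveRoot
  refine (Nat.pow_lt_pow_iff_right hp.one_lt).1 ?_
  calc p ^ classRank p K
    _ ≤ Nat.card {c : IdealClass L // c ^ p = 1 ∧ δ • c = c} := by
      refine pow_classRank_le_card_fixed K L ?_ δ
      rw [hKL]
      exact (Nat.coprime_self_sub_right hp.one_le).2 (Nat.coprime_one_right p)
    _ ≤ Nat.card {c : IdealClass L // c ^ p = 1 ∧ σ • c = c} :=
      card_fixed_torsion_le_of_galois F K L hF hFL hσ g_injOn (DFunLike.congr_fun semilinear)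
    _ < p ^ (p - 1) := by
      refine card_fixed_torsion_lt_of_pow_eq F L (x := ⟨algebraMap K L α, α_integral⟩) hp2 hF hFL
        unit_primitive.eq_orderOf.symm hσ hN hNp (RingOfIntegers.ext ?_) (RingOfIntegers.ext ?_)
      · change algebraMap K L α ^ p = algebraMap (𝓞 L) L N
        rw [← map_pow, hα, map_natCast, map_natCast]
      · exact hσα

lemma classRank_lt_of_pow_eq {F K L : Type*} [Field F] [NumberField F] [Field K] [NumberField K]
    [Field L] [NumberField L] [Algebra F L] [Algebra K L] {p N : ℕ} [Fact p.Prime] (hp2 : 2 < p)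
    [IsCyclotomicExtension {p} ℚ F] [IsCyclotomicExtension {p} K L]
    (hF : p.Coprime (Nat.card (ClassGroup (𝓞 F)))) (hN : N.Prime) (hNp : N ≡ 1 [MOD p]) {α : K}
    (hα : α ^ p = N) (hK : Module.finrank ℚ K = p) : classRank p K < p - 1 := by
  have hp : p.Prime := Fact.out
  have finrank_F : Module.finrank ℚ F = p - 1 := by
    rw [IsCyclotomicExtension.Rat.finrank p F, Nat.totient_prime hp]
  have not_dvd : ¬ p ∣ Module.finrank ℚ F := by
    rw [finrank_F]
    exact Nat.not_dvd_of_pos_of_lt (Nat.sub_pos_of_lt hp.one_lt) (Nat.sub_lt hp.pos one_pos)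
  have finrank_le : Module.finrank K L ≤ Module.finrank ℚ F := by
    rw [finrank_F, ← Nat.totient_prime hp]
    exact finrank_le_totient p K L
  obtain ⟨finrank_KL, finrank_FL⟩ := finrank_eq_of_coprime_of_le ℚ F K L
    (by rwa [hK, Nat.coprime_comm, hp.coprime_iff_not_dvd]) finrank_le
  rw [hK] at finrank_FL
  have irreducible :=
    irreducible_X_pow_sub_C_algebraMap hp (irreducible_X_pow_sub_C_natCast hp hN) not_dvd
  rw [map_natCast] at irreducible
  have ζ_primitive := IsCyclotomicExtension.zeta_spec p ℚ F
  have pow_eq : algebraMap K L α ^ p = algebraMap F L N := by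
    rw [← map_pow, hα, map_natCast, map_natCast]
  have := isSplittingField_X_pow_sub_C irreducible finrank_FL ζ_primitive pow_eq
  have : IsGalois F L := isGalois_of_isSplittingField_X_pow_sub_C
    ⟨_, (mem_primitiveRoots hp.pos).2 ζ_primitive⟩ irreducible L
  obtain ⟨σ, hσ, hσα⟩ := exists_generator_apply_eq_mul irreducible ζ_primitive pow_eq
  exact classRank_lt_of_isGalois hp2 hF finrank_FL (finrank_KL.trans finrank_F) hN hNp hα
    ζ_primitive hσ (adjoin_root_X_pow_sub_C_eq_top irreducible finrank_FL pow_eq) hσα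

lemma classRank_lt_of_coprime_card_classGroup {F K : Type*} [Field F] [NumberField F] [Field K]
    [NumberField K] {p N : ℕ} [Fact p.Prime] (hp2 : 2 < p) [IsCyclotomicExtension {p} ℚ F]
    (hF : p.Coprime (Nat.card (ClassGroup (𝓞 F)))) (hN : N.Prime) (hNp : N ≡ 1 [MOD p]) {α : K}
    (hα : α ^ p = N) (hK : Module.finrank ℚ K = p) : classRank p K < p - 1 := by
  let L := CyclotomicField p K
  have : NumberField L := IsCyclotomicExtension.numberField {p} K L
  have splits : Splits ((cyclotomic p ℚ).map (algebraMap ℚ L)) := by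
    have splits_K := IsCyclotomicExtension.splits_cyclotomic (n := p) K L (Set.mem_singleton p)
    rwa [map_cyclotomic] at splits_K ⊢
  have := IsCyclotomicExtension.splitting_field_cyclotomic p ℚ F
  let _ : Algebra F L := (IsSplittingField.lift F (cyclotomic p ℚ) splits).toRingHom.toAlgebra
  exact classRank_lt_of_pow_eq (L := L) hp2 hF hN hNp hα hK

lemma isCyclotomicExtension_cyclotomicField_rat (n : ℕ) [NeZero n] :
    @IsCyclotomicExtension {n} ℚ (CyclotomicField n ℚ) _ _ DivisionRing.toRatAlgebra := by
  rw [← Subsingleton.elim (CyclotomicField.algebra n ℚ) DivisionRing.toRatAlgebra]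
  exact CyclotomicField.isCyclotomicExtension n ℚ

end UpperBound

open NumberField in
theorem statement2_general (p : ℕ+) (hp : (p : ℕ).Prime) (hp2 : p ≠ 2) (hreg : RegularPrime p)
    (N : ℕ) (hN : N.Prime) (hNmod : N % p = 1) (K : Type*) [Field K] [NumberField K] (α : K)
    (hα : α ^ (p : ℕ) = (N : K)) (hKdeg : Module.finrank ℚ K = p) :
    1 ≤ classRank p K ∧ classRank p K ≤ p - 2 := by
  have : Fact (p : ℕ).Prime := ⟨hp⟩
  have hNp : N ≡ 1 [MOD p] := hNmod.trans (Nat.mod_eq_of_lt hp.one_lt).symm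
  have p_ne_two : (p : ℕ) ≠ 2 := fun h ↦ hp2 (PNat.coe_injective h)
  have two_lt_p : 2 < (p : ℕ) := lt_of_le_of_ne hp.two_le p_ne_two.symm
  have α_integral : IsIntegral ℤ α := .of_pow hp.pos (hα ▸ isIntegral_natCast N)
  have pow_eq : (⟨α, α_integral⟩ : 𝓞 K) ^ (p : ℕ) = N := RingOfIntegers.ext <| by
    change α ^ (p : ℕ) = algebraMap (𝓞 K) K N
    rw [hα, map_natCast]
  have finrank_eq : Module.finrank ℤ (𝓞 K) = p := (RingOfIntegers.rank K).trans hKdeg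
  have := isCyclotomicExtension_cyclotomicField_rat p
  have coprime := hp.coprime_iff_not_dvd.2 hreg
  refine ⟨one_le_pRank_classGroup_of_pow_eq hp p_ne_two hN hNp finrank_eq pow_eq, ?_⟩
  have classRank_lt := classRank_lt_of_coprime_card_classGroup two_lt_p coprime hN hNp hα hKdeg
  lia

lemma regularPrime_five : RegularPrime 5 := by
  have := isCyclotomicExtension_cyclotomicField_rat 5
  have := IsCyclotomicExtension.Rat.five_pid (CyclotomicField 5 ℚ)
  change ¬ 5 ∣ Nat.card (ClassGroup (NumberField.RingOfIntegers (CyclotomicField 5 ℚ)))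
  rw [Nat.card_eq_fintype_card, card_classGroup_eq_one_iff.2 this]
  decide

/-- For `p = 5` and a prime `N ≡ 1 (mod 5)`, the `5`-rank of the class group of
`K = ℚ(N^{1/5})` satisfies `1 ≤ r_K ≤ 3`. -/
theorem statement2 (N : ℕ) (hN : N.Prime) (hNmod : N % 5 = 1)
    (K : Type*) [Field K] [NumberField K]
    (α : K) (hα : α ^ 5 = (N : K)) (hKdeg : Module.finrank ℚ K = 5) :
    1 ≤ classRank 5 K ∧ classRank 5 K ≤ 3 :=
  statement2_general 5 Nat.prime_five (by decide) regularPrime_five N hN hNmod K α hα hKdeg
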